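/- arXiv:2509.04200 — 2 statements merged into one kernel-verified Lean document; each statement's English description precedes it below -/
import Mathlib

section
/- Let T be a rooted tree on a countably infinite vertex set X and let P be the set of all rooted paths of T. Then at least one of the following holds: (i) T contains a subtree in which every vertex has a descendant of infinite degree, and 𝒮(T) ≈ I_X; (ii) T contains no such subtree but contains a subtree in which every vertex has a descendant of degree at least 3, and 𝒮(T) ≈ PStab(𝒫_ω); (iii) P is countable and 𝒮(T) ≈ ∅. -/
open Set Cardinal

universe u

/-- A chart on `X` (an element of the symmetric inverse monoid `I_X`): a partial
bijection between subsets of `X`, encoded as a functional, injective relation,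
i.e. a set of pairs. -/
structure Chart (X : Type u) : Type u where
  rel : Set (X × X)
  functional : ∀ ⦃x y y'⦄, (x, y) ∈ rel → (x, y') ∈ rel → y = y'
  injective : ∀ ⦃x x' y⦄, (x, y) ∈ rel → (x', y) ∈ rel → x = x'

namespace Chart

variable {X : Type u}

/-- Composition of charts: compose wherever possible. -/
instance : Mul (Chart X) :=
  ⟨fun f g =>
    { rel := {p | ∃ y, (p.1, y) ∈ f.rel ∧ (y, p.2) ∈ g.rel}
      functional := by
        rintro x y y' ⟨z, hz1, hz2⟩ ⟨w, hw1, hw2⟩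
        obtain rfl : z = w := f.functional hz1 hw1
        exact g.functional hz2 hw2
      injective := by
        rintro x x' y ⟨z, hz1, hz2⟩ ⟨w, hw1, hw2⟩
        obtain rfl : z = w := g.injective hz2 hw2
        exact f.injective hz1 hw1 }⟩

/-- The inverse chart. -/
instance : Inv (Chart X) :=
  ⟨fun f =>
    { rel := {p | (p.2, p.1) ∈ f.rel}
      functional := fun _ _ _ h h' => f.injective h h'
      injective := fun _ _ _ h h' => f.functional h h' }⟩

/-- The domain of a chart. -/
def dom (f : Chart X) : Set X := {x | ∃ y, (x, y) ∈ f.rel}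

/-- The range (image) of a chart. -/
def ran (f : Chart X) : Set X := {y | ∃ x, (x, y) ∈ f.rel}

end Chart

/-- Membership in the subsemigroup of `I_X` generated by a set of charts. -/
inductive InGen {X : Type u} (S : Set (Chart X)) : Chart X → Prop
  | base {f : Chart X} : f ∈ S → InGen S f
  | mul {f g : Chart X} : InGen S f → InGen S g → InGen S (f * g)

/-- The subsemigroup of `I_X` generated by a set of charts. -/
def Sgen {X : Type u} (S : Set (Chart X)) : Set (Chart X) := {f | InGen S f}

/-- The Bergman–Shelah preorder `S ≼ T` on subsets of `I_X`: there is a countable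
subset `U ⊆ I_X` with `S` contained in the subsemigroup generated by `T ∪ U`. -/
def BSleq {X : Type u} (S T : Set (Chart X)) : Prop :=
  ∃ U : Set (Chart X), U.Countable ∧ S ⊆ Sgen (T ∪ U)

/-- Bergman–Shelah equivalence `S ≈ T`. -/
def BSequiv {X : Type u} (S T : Set (Chart X)) : Prop := BSleq S T ∧ BSleq T S

/-- The Bergman–Shelah preorder relative to a cardinal `κ`: `S ≼_κ T` iff there is
`U ⊆ I_X` with `|U| < κ` and `S` contained in the subsemigroup generated by `T ∪ U`. -/
def BSleqC {X : Type u} (κ : Cardinal.{u}) (S T : Set (Chart X)) : Prop :=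
  ∃ U : Set (Chart X), #↥U < κ ∧ S ⊆ Sgen (T ∪ U)

/-- Bergman–Shelah equivalence relative to a cardinal `κ`. -/
def BSequivC {X : Type u} (κ : Cardinal.{u}) (S T : Set (Chart X)) : Prop :=
  BSleqC κ S T ∧ BSleqC κ T S

/-- A chart is a permutation of `X` if it is everywhere defined and surjective. -/
def IsPermChart {X : Type u} (f : Chart X) : Prop :=
  (∀ x : X, ∃ y, (x, y) ∈ f.rel) ∧ ∀ y : X, ∃ x, (x, y) ∈ f.rel

/-- The partwise stabiliser of a family of subsets of `X`: all permutations of `X`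
mapping each member of the family onto itself. -/
def PStab {X : Type u} (P : Set (Set X)) : Set (Chart X) :=
  {f | IsPermChart f ∧ ∀ B ∈ P, {y | ∃ x ∈ B, (x, y) ∈ f.rel} = B}

/-- A subset of `I_X` closed under composition. -/
def IsSubsemigroup {X : Type u} (S : Set (Chart X)) : Prop :=
  ∀ f ∈ S, ∀ g ∈ S, f * g ∈ S

/-- A subsemigroup of `I_X` closed under inversion. -/
def IsInverseSubsemigroup {X : Type u} (S : Set (Chart X)) : Prop :=
  IsSubsemigroup S ∧ ∀ f ∈ S, f⁻¹ ∈ S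

/-- The orbit of a point under a set of charts: `{x} ∪ {xf : f ∈ M, x ∈ dom f}`. -/
def ChartOrbit {X : Type u} (M : Set (Chart X)) (x : X) : Set X :=
  insert x {y | ∃ f ∈ M, (x, y) ∈ f.rel}

/-- The cone of a point under a set of charts: `{xs : s ∈ S, x ∈ dom s}`. -/
def ChartCone {X : Type u} (S : Set (Chart X)) (x : X) : Set X :=
  {y | ∃ f ∈ S, (x, y) ∈ f.rel}

/-- The semilattice of idempotents of `I_X`: the partial identity charts. -/
def EX (X : Type u) : Set (Chart X) := {f | ∀ x y : X, (x, y) ∈ f.rel → y = x}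

/-- A `κ`-uniform partition: every part has cardinality `κ`. -/
def IsUniformPartition {X : Type u} (κ : Cardinal.{u}) (P : Set (Set X)) : Prop :=
  Setoid.IsPartition P ∧ ∀ B ∈ P, #↥B = κ

/-- A `κ`-unbounded partition: all parts have cardinality `< κ` but no cardinal
`c < κ` bounds the cardinalities of all parts. -/
def IsUnboundedPartition {X : Type u} (κ : Cardinal.{u}) (P : Set (Set X)) : Prop :=
  Setoid.IsPartition P ∧ (∀ B ∈ P, #↥B < κ) ∧ ¬∃ c < κ, ∀ B ∈ P, #↥B ≤ c

/-- A `κ`-bounded partition: some cardinal `c < κ` bounds the cardinalities of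
all parts. -/
def IsBoundedPartition {X : Type u} (κ : Cardinal.{u}) (P : Set (Set X)) : Prop :=
  Setoid.IsPartition P ∧ ∃ c < κ, ∀ B ∈ P, #↥B ≤ c

/-- A rooted tree on (a subset of) `X`, encoded via its parent function: every
vertex reaches the root by finitely many applications of `par`. -/
structure RTree (X : Type u) : Type u where
  verts : Set X
  root : X
  root_mem : root ∈ verts
  par : X → X
  par_mem : ∀ x ∈ verts, par x ∈ verts
  par_root : par root = root
  par_reaches : ∀ x ∈ verts, ∃ n : ℕ, par^[n] x = root

namespace RTree

variable {X : Type u}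

/-- `T.anc x y` : `x` is an ancestor of `y` (or `x = y`), i.e. `x` lies on the
rooted path to `y`. -/
def anc (T : RTree X) (x y : X) : Prop := ∃ n : ℕ, T.par^[n] y = x

/-- The level of a vertex: its distance to the root. -/
noncomputable def level (T : RTree X) (x : X) : ℕ := sInf {n : ℕ | T.par^[n] x = T.root}

/-- The children of a vertex. -/
def children (T : RTree X) (x : X) : Set X :=
  {y | y ∈ T.verts ∧ T.par y = x ∧ y ≠ x}

/-- The neighbours of a vertex in the tree (its children together with its
parent, if the vertex is not the root); the degree of the vertex is the size
of this set. -/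
def nbhd (T : RTree X) (x : X) : Set X :=
  {y | y ∈ T.verts ∧ ((T.par y = x ∧ y ≠ x) ∨ (T.par x = y ∧ x ≠ y))}

/-- `P` is the vertex set of a (finite or infinite) path of `T` starting at the
root: a nonempty set of vertices closed under taking parents and linearly
ordered by ancestry. -/
def IsRootedPath (T : RTree X) (P : Set X) : Prop :=
  P.Nonempty ∧ P ⊆ T.verts ∧ (∀ x ∈ P, T.par x ∈ P) ∧
    ∀ x ∈ P, ∀ y ∈ P, T.anc x y ∨ T.anc y x

end RTree

/-- `T'` is a subtree of `T`: a rooted tree on a subset of the vertices of `T`,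
with the same root and the same parent relation. -/
def IsSubtree {X : Type u} (T' T : RTree X) : Prop :=
  T'.verts ⊆ T.verts ∧ T'.root = T.root ∧ ∀ x ∈ T'.verts, T'.par x = T.par x

/-- `Q` is a quasi-subtree of `T`: a rooted tree on a subset of the vertices of
`T` preserving the ancestry relation and the levels of `T`. -/
def IsQuasiSubtree {X : Type u} (Q T : RTree X) : Prop :=
  Q.verts ⊆ T.verts ∧
    (∀ x ∈ Q.verts, ∀ y ∈ Q.verts, (Q.anc x y ↔ T.anc x y)) ∧
    ∀ x ∈ Q.verts, ∀ y ∈ Q.verts, (Q.level x = Q.level y ↔ T.level x = T.level y)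

/-- Isomorphism of rooted trees: a bijection of the vertex sets mapping root to
root and commuting with the parent functions. -/
def RTreeIso {X : Type u} {Y : Type u} (T : RTree X) (R : RTree Y) : Prop :=
  ∃ φ : X → Y, Set.BijOn φ T.verts R.verts ∧ φ T.root = R.root ∧
    ∀ x ∈ T.verts, φ (T.par x) = R.par (φ x)

/-- The semigroup `𝒮(T)` of path-bijections of a rooted tree `T`: charts whose
domain and range are vertex sets of rooted paths and which preserve levels. -/
def pathSg {X : Type u} (T : RTree X) : Set (Chart X) :=
  {f | (∃ P, T.IsRootedPath P ∧ Chart.dom f = P) ∧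
    (∃ Q, T.IsRootedPath Q ∧ Chart.ran f = Q) ∧
    ∀ x y : X, (x, y) ∈ f.rel → T.level y = T.level x}

/-!
For the lower bounds, charts are coded by rays of the tree in such a way that two rays agree exactly
as long as the charts they code do. One extra chart can then carry the relations of all the coded
charts at once, each along its own ray, and moving a fixed ray to the ray of a chart, applying the
extra chart and moving back recovers the chart. A chart preserving the blocks of a decomposition is
coded as the word of its restrictions to initial blocks. If every vertex has a descendant of
infinite degree, there is room for all decompositions into finite blocks, and the charts preserving
some such decomposition essentially generate `I_X`. Binary branching only leaves room for a
decomposition fixed in advance, which is enough for a partwise stabiliser with finite parts.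

For the upper bounds, a Cantor–Bendixson argument removes the vertices whose rooted paths are
covered by countably many sets that have finitely many points (respectively, at most one point) on
each level. If some vertex remains, they form a subtree as in (i) (respectively, (ii)). Otherwise,
on each of countably many pieces of `𝒮(T)`, the path-bijections preserve a finite-to-one rank, hence
embed into `PStab 𝒫_ω` (respectively, every infinite rooted path is one of countably many sets).
-/

namespace Chart

variable {X : Type u} {Y : Type*}

theorem mem_mul {f g : Chart X} {x z : X} :
    (x, z) ∈ (f * g).rel ↔ ∃ y, (x, y) ∈ f.rel ∧ (y, z) ∈ g.rel := Iff.rfl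

theorem mem_inv {f : Chart X} {x y : X} : (x, y) ∈ (f⁻¹).rel ↔ (y, x) ∈ f.rel := Iff.rfl

@[ext]
theorem ext {f g : Chart X} (h : ∀ x y, (x, y) ∈ f.rel ↔ (x, y) ∈ g.rel) : f = g := by
  obtain ⟨f, _, _⟩ := f
  obtain ⟨g, _, _⟩ := g
  obtain rfl : f = g := Set.ext fun p => h p.1 p.2
  rfl

/-- The everywhere defined chart given by an injective self-map. -/
def ofInjective (f : X → X) (hf : f.Injective) : Chart X where
  rel := {p | p.2 = f p.1}
  functional := fun _ _ _ h h' => h.trans h'.symm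
  injective := fun _ _ _ h h' => hf (h.symm.trans h')

theorem mem_ofInjective {f : X → X} {hf : f.Injective} {x y : X} :
    (x, y) ∈ (ofInjective f hf).rel ↔ y = f x := Iff.rfl

theorem eq_conj_ofInjective {f g : X → X} (hf : f.Injective) (hg : g.Injective) {s t : Chart X}
    (h : ∀ x y, (x, y) ∈ s.rel ↔ (f x, g y) ∈ t.rel) :
    s = ofInjective f hf * (t * (ofInjective g hg)⁻¹) := by
  ext x y
  simp only [h, mem_mul, mem_inv, mem_ofInjective, exists_eq_left, exists_eq_right]

/-- The charts that map each point into its own fibre of `κ`. -/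
def fiberwise (κ : X → Y) : Set (Chart X) :=
  {f | ∀ x y, (x, y) ∈ f.rel → κ x = κ y}

end Chart

section BergmanShelah

variable {X : Type u} {S T W : Set (Chart X)}

theorem InGen.mono (hST : S ⊆ T) {f : Chart X} (hf : InGen S f) : InGen T f := by
  induction hf with
  | base h => exact .base (hST h)
  | mul _ _ ihf ihg => exact .mul ihf ihg

theorem InGen.trans (hST : S ⊆ Sgen T) {f : Chart X} (hf : InGen S f) : InGen T f := by
  induction hf with
  | base h => exact hST h
  | mul _ _ ihf ihg => exact .mul ihf ihg

theorem BSleq.of_subset (h : S ⊆ T) : BSleq S T :=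
  ⟨∅, countable_empty, fun _ hf => .base (.inl (h hf))⟩

theorem BSleq.trans (hST : BSleq S T) (hTW : BSleq T W) : BSleq S W := by
  obtain ⟨U, hU, hS⟩ := hST
  obtain ⟨V, hV, hT⟩ := hTW
  refine ⟨U ∪ V, hU.union hV, fun f hf => InGen.trans ?_ (hS hf)⟩
  rintro g (hg | hg)
  · exact InGen.mono (union_subset_union_right W subset_union_right) (hT hg)
  · exact .base (.inr (.inl hg))

theorem BSleq.iUnion {ι : Type*} [Countable ι] {S : ι → Set (Chart X)}
    (h : ∀ i, BSleq (S i) T) : BSleq (⋃ i, S i) T := by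
  choose U hU hS using h
  refine ⟨⋃ i, U i, countable_iUnion hU, iUnion_subset fun i f hf => ?_⟩
  exact InGen.mono (union_subset_union_right T (subset_iUnion U i)) (hS i hf)

theorem BSleq.union_countable {U : Set (Chart X)} (hU : U.Countable) : BSleq (T ∪ U) T :=
  ⟨U, hU, fun _ hf => .base hf⟩

theorem BSleq.of_countable (hS : S.Countable) : BSleq S T :=
  ⟨S, hS, fun _ hf => .base (.inr hf)⟩

theorem BSleq.of_sgen : BSleq (Sgen T) T :=
  ⟨∅, countable_empty, fun _ hf => InGen.mono subset_union_left hf⟩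

theorem BSleq.of_injective {f g : X → X} (hf : f.Injective) (hg : g.Injective)
    (h : ∀ s ∈ S, ∃ t ∈ T, ∀ x y, (x, y) ∈ s.rel ↔ (f x, g y) ∈ t.rel) : BSleq S T := by
  refine ⟨{Chart.ofInjective f hf, (Chart.ofInjective g hg)⁻¹}, Set.to_countable _, fun s hs => ?_⟩
  obtain ⟨t, ht, hst⟩ := h s hs
  rw [Chart.eq_conj_ofInjective hf hg hst]
  exact .mul (.base (.inr (.inl rfl))) (.mul (.base (.inl ht)) (.base (.inr (.inr rfl))))

end BergmanShelah

/-! ### Rooted trees and rays -/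

namespace RTree

variable {X : Type u} {T : RTree X} {x y z w : X} {n i j : ℕ}

theorem iterate_par_mem (hx : x ∈ T.verts) (n : ℕ) : T.par^[n] x ∈ T.verts :=
  Set.MapsTo.iterate (fun y hy => T.par_mem y hy) n hx

theorem iterate_par_level (hx : x ∈ T.verts) : T.par^[T.level x] x = T.root :=
  Nat.sInf_mem (T.par_reaches x hx)

theorem level_le_of_iterate (h : T.par^[n] x = T.root) : T.level x ≤ n := Nat.sInf_le h

theorem level_root : T.level T.root = 0 := Nat.le_zero.mp (level_le_of_iterate rfl)

theorem level_eq_zero (hx : x ∈ T.verts) : T.level x = 0 ↔ x = T.root := by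
  refine ⟨fun h => ?_, fun h => h ▸ level_root⟩
  simpa only [h, Function.iterate_zero_apply] using iterate_par_level hx

theorem level_par (hx : x ∈ T.verts) : T.level (T.par x) = T.level x - 1 := by
  have hup : T.par^[T.level (T.par x) + 1] x = T.root :=
    iterate_par_level (T.par_mem x hx)
  have hle := level_le_of_iterate hup
  cases h : T.level x with
  | zero => rw [(level_eq_zero hx).mp h, T.par_root, level_root]
  | succ m =>
    have hm : T.par^[m + 1] x = T.root := by rw [← h, iterate_par_level hx]
    have : T.level (T.par x) ≤ m := level_le_of_iterate hm
    omega

theorem level_iterate_par (hx : x ∈ T.verts) (n : ℕ) :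
    T.level (T.par^[n] x) = T.level x - n := by
  induction n with
  | zero => rfl
  | succ n ih =>
    rw [Function.iterate_succ_apply', level_par (iterate_par_mem hx n), ih, Nat.sub_sub]

theorem anc_refl (x : X) : T.anc x x := ⟨0, rfl⟩

theorem anc_par (x : X) : T.anc (T.par x) x := ⟨1, rfl⟩

theorem anc_root (hx : x ∈ T.verts) : T.anc T.root x := ⟨_, iterate_par_level hx⟩

theorem anc.trans (hxy : T.anc x y) (hyz : T.anc y z) : T.anc x z := by
  obtain ⟨m, rfl⟩ := hxy
  obtain ⟨n, rfl⟩ := hyz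
  exact ⟨m + n, Function.iterate_add_apply _ m n z⟩

theorem anc.mem (h : T.anc x y) (hy : y ∈ T.verts) : x ∈ T.verts := by
  obtain ⟨n, rfl⟩ := h
  exact iterate_par_mem hy n

theorem anc.level_le (h : T.anc x y) (hy : y ∈ T.verts) : T.level x ≤ T.level y := by
  obtain ⟨n, rfl⟩ := h
  rw [level_iterate_par hy]
  exact Nat.sub_le _ _

/-- The ancestor of `x` at level `i`, for `i ≤ T.level x`; for larger `i` it is `x` itself. -/
noncomputable def ancAt (T : RTree X) (x : X) (i : ℕ) : X := T.par^[T.level x - i] x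

theorem anc_ancAt (x : X) (i : ℕ) : T.anc (T.ancAt x i) x := ⟨_, rfl⟩

theorem level_ancAt (hx : x ∈ T.verts) (hi : i ≤ T.level x) : T.level (T.ancAt x i) = i := by
  rw [ancAt, level_iterate_par hx, Nat.sub_sub_self hi]

theorem anc.ancAt_level (h : T.anc x y) (hy : y ∈ T.verts) : T.ancAt y (T.level x) = x := by
  obtain ⟨n, rfl⟩ := h
  rw [ancAt, level_iterate_par hy]
  rcases le_total n (T.level y) with hn | hn
  · rw [Nat.sub_sub_self hn]
  · rw [Nat.sub_eq_zero_of_le hn, Nat.sub_zero, iterate_par_level hy]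
    obtain ⟨m, rfl⟩ := Nat.exists_eq_add_of_le' hn
    rw [Function.iterate_add_apply, iterate_par_level hy, Function.iterate_fixed T.par_root]

theorem anc.ancAt_eq (h : T.anc x y) (hy : y ∈ T.verts) (hi : i ≤ T.level x) :
    T.ancAt y i = T.ancAt x i := by
  have := ((anc_ancAt x i).trans h).ancAt_level hy
  rwa [level_ancAt (h.mem hy) hi] at this

theorem anc.eq_of_level_eq (h : T.anc x y) (hy : y ∈ T.verts) (hl : T.level x = T.level y) :
    x = y := by
  rw [← h.ancAt_level hy, hl, (anc_refl y).ancAt_level hy]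

theorem anc.of_le (hx : T.anc x z) (hy : T.anc y z) (hz : z ∈ T.verts)
    (hl : T.level x ≤ T.level y) : T.anc x y := by
  rw [← hx.ancAt_level hz, hy.ancAt_eq hz hl]
  exact anc_ancAt y _

theorem mem_of_mem_children (h : y ∈ T.children x) : y ∈ T.verts := h.1

theorem anc_of_mem_children (h : y ∈ T.children x) : T.anc x y := h.2.1 ▸ anc_par y

theorem level_of_mem_children (h : y ∈ T.children x) : T.level y = T.level x + 1 := by
  obtain ⟨hy, rfl, hne⟩ := h
  have : T.level y ≠ 0 := fun h0 => by
    rw [(level_eq_zero hy).mp h0, T.par_root] at hne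
    exact hne rfl
  rw [level_par hy]
  omega

theorem mem_children_par (hx : x ∈ T.verts) (hl : T.level x ≠ 0) :
    x ∈ T.children (T.par x) := by
  refine ⟨hx, rfl, fun h => hl ?_⟩
  have := level_par hx
  rw [← h] at this
  omega

theorem ancAt_mem_children (hx : x ∈ T.verts) (hi : i < T.level x) :
    T.ancAt x (i + 1) ∈ T.children (T.ancAt x i) := by
  have hmem : T.ancAt x (i + 1) ∈ T.verts := (anc_ancAt x _).mem hx
  have hpar : T.par (T.ancAt x (i + 1)) = T.ancAt x i := by
    rw [ancAt, ancAt, ← Function.iterate_succ_apply' T.par]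
    congr 2
    omega
  rw [← hpar]
  refine mem_children_par hmem ?_
  rw [level_ancAt hx hi]
  exact Nat.succ_ne_zero i

theorem IsRootedPath.mem_of_anc {P : Set X} (h : T.IsRootedPath P) (hxy : T.anc x y)
    (hy : y ∈ P) : x ∈ P := by
  obtain ⟨n, rfl⟩ := hxy
  exact Set.MapsTo.iterate (fun z hz => h.2.2.1 z hz) n hy

theorem IsRootedPath.root_mem {P : Set X} (h : T.IsRootedPath P) : T.root ∈ P := by
  obtain ⟨x, hx⟩ := h.1
  exact h.mem_of_anc (anc_root (h.2.1 hx)) hx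

theorem IsRootedPath.injOn_level {P : Set X} (h : T.IsRootedPath P) : InjOn T.level P := by
  intro x hx y hy hl
  rcases h.2.2.2 x hx y hy with hxy | hyx
  · exact hxy.eq_of_level_eq (h.2.1 hy) hl
  · exact (hyx.eq_of_level_eq (h.2.1 hx) hl.symm).symm

/-- An infinite rooted path, given as the sequence of its vertices. -/
def IsRay (T : RTree X) (g : ℕ → X) : Prop :=
  g 0 = T.root ∧ ∀ i, g (i + 1) ∈ T.children (g i)

namespace IsRay

variable {g h : ℕ → X}

theorem level_eq (hg : T.IsRay g) (i : ℕ) : T.level (g i) = i := by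
  induction i with
  | zero => rw [hg.1, level_root]
  | succ i ih => rw [level_of_mem_children (hg.2 i), ih]

theorem mem (hg : T.IsRay g) (i : ℕ) : g i ∈ T.verts := by
  cases i with
  | zero => exact hg.1 ▸ T.root_mem
  | succ i => exact mem_of_mem_children (hg.2 i)

theorem eq_of_apply_eq (hg : T.IsRay g) (hh : T.IsRay h) (hij : g i = h j) : i = j := by
  rw [← hg.level_eq i, hij, hh.level_eq]

theorem anc (hg : T.IsRay g) (hij : i ≤ j) : T.anc (g i) (g j) := by
  induction j, hij using Nat.le_induction with
  | base => exact anc_refl _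
  | succ j _ ih => exact ih.trans (anc_of_mem_children (hg.2 j))

theorem eq_of_le (hg : T.IsRay g) (hh : T.IsRay h) (hj : g j = h j) (hij : i ≤ j) :
    g i = h i := by
  have hgi := (hg.anc hij).ancAt_level (hg.mem j)
  have hhi := (hh.anc hij).ancAt_level (hh.mem j)
  rw [hg.level_eq] at hgi
  rw [hh.level_eq] at hhi
  rw [← hgi, ← hhi, hj]

theorem isRootedPath (hg : T.IsRay g) : T.IsRootedPath (range g) := by
  refine ⟨range_nonempty g, range_subset_iff.mpr hg.mem, ?_, ?_⟩
  · rintro _ ⟨_ | i, rfl⟩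
    · exact ⟨0, by rw [hg.1, T.par_root]⟩
    · exact ⟨i, (hg.2 i).2.1.symm⟩
  · rintro _ ⟨i, rfl⟩ _ ⟨j, rfl⟩
    exact (le_total i j).imp hg.anc hg.anc

/-- The path-bijection matching two rays level by level. -/
def chart (hg : T.IsRay g) (hh : T.IsRay h) : Chart X where
  rel := {q | ∃ i, q = (g i, h i)}
  functional := by
    rintro x y y' ⟨i, hi⟩ ⟨j, hj⟩
    simp only [Prod.mk.injEq] at hi hj
    rw [hi.2, hj.2, hg.eq_of_apply_eq hg (hi.1.symm.trans hj.1)]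
  injective := by
    rintro x x' y ⟨i, hi⟩ ⟨j, hj⟩
    simp only [Prod.mk.injEq] at hi hj
    rw [hi.1, hj.1, hh.eq_of_apply_eq hh (hi.2.symm.trans hj.2)]

theorem mem_chart_left (hg : T.IsRay g) (hh : T.IsRay h) :
    (g i, y) ∈ (hg.chart hh).rel ↔ y = h i := by
  constructor
  · rintro ⟨j, hj⟩
    simp only [Prod.mk.injEq] at hj
    rw [hj.2, hg.eq_of_apply_eq hg hj.1]
  · rintro rfl
    exact ⟨i, rfl⟩

theorem mem_chart_right (hg : T.IsRay g) (hh : T.IsRay h) :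
    (x, h i) ∈ (hg.chart hh).rel ↔ x = g i := by
  constructor
  · rintro ⟨j, hj⟩
    simp only [Prod.mk.injEq] at hj
    rw [hj.1, hh.eq_of_apply_eq hh hj.2]
  · rintro rfl
    exact ⟨i, rfl⟩

theorem chart_mem_pathSg (hg : T.IsRay g) (hh : T.IsRay h) : hg.chart hh ∈ pathSg T := by
  refine ⟨⟨_, hg.isRootedPath, ?_⟩, ⟨_, hh.isRootedPath, ?_⟩, ?_⟩
  · ext x
    exact ⟨fun ⟨_, i, hi⟩ => ⟨i, (congrArg Prod.fst hi).symm⟩,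
      fun ⟨i, hi⟩ => ⟨h i, i, by rw [hi]⟩⟩
  · ext y
    exact ⟨fun ⟨_, i, hi⟩ => ⟨i, (congrArg Prod.snd hi).symm⟩,
      fun ⟨i, hi⟩ => ⟨g i, i, by rw [hi]⟩⟩
  · rintro x y ⟨i, hi⟩
    simp only [Prod.mk.injEq] at hi
    rw [hi.1, hi.2, hg.level_eq, hh.level_eq]

end IsRay

section Chain

variable {Y : ℕ → X}

theorem anc_of_le_of_chain (hY : ∀ k, T.anc (Y k) (Y (k + 1))) (hij : i ≤ j) :
    T.anc (Y i) (Y j) := by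
  induction j, hij using Nat.le_induction with
  | base => exact anc_refl _
  | succ j _ ih => exact ih.trans (hY j)

theorem ancAt_eq_of_chain (hmem : ∀ k, Y k ∈ T.verts) (hY : ∀ k, T.anc (Y k) (Y (k + 1)))
    (hl : ∀ k, k ≤ T.level (Y k)) (hi : i ≤ T.level (Y j)) :
    T.ancAt (Y i) i = T.ancAt (Y j) i := by
  rcases le_total i j with hij | hji
  · exact ((anc_of_le_of_chain hY hij).ancAt_eq (hmem j) (hl i)).symm
  · exact (anc_of_le_of_chain hY hji).ancAt_eq (hmem i) hi

theorem isRay_of_chain (hmem : ∀ k, Y k ∈ T.verts) (hY : ∀ k, T.anc (Y k) (Y (k + 1)))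
    (hl : ∀ k, k ≤ T.level (Y k)) : T.IsRay fun i => T.ancAt (Y i) i := by
  refine ⟨?_, fun i => ?_⟩
  · have h0 : T.level (T.ancAt (Y 0) 0) = 0 := level_ancAt (hmem 0) (Nat.zero_le _)
    exact (level_eq_zero ((anc_ancAt _ _).mem (hmem 0))).mp h0
  · have hi : i < T.level (Y (i + 1)) := hl (i + 1)
    simp only [ancAt_eq_of_chain hmem hY hl hi.le]
    exact ancAt_mem_children (hmem _) hi

end Chain

end RTree

/-! ### Charts coded by rays -/

namespace RTree

variable {X : Type u} {T : RTree X}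

/-- The rays `g a` code the charts `a ∈ A`, the point `x` being placed at level `l x`: two rays
that meet at the level of an end of a pair in one of their charts meet at the levels of both ends,
and that pair belongs to both charts. -/
structure IsCoding (T : RTree X) (A : Set (Chart X)) (l : X → ℕ) (g : Chart X → ℕ → X) :
    Prop where
  injective : l.Injective
  isRay : ∀ a ∈ A, T.IsRay (g a)
  agree : ∀ a ∈ A, ∀ b ∈ A, ∀ x y, (x, y) ∈ a.rel →
    (g a (l x) = g b (l x) ∨ g a (l y) = g b (l y)) →
    (x, y) ∈ b.rel ∧ g a (l x) = g b (l x) ∧ g a (l y) = g b (l y)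

namespace IsCoding

variable {A : Set (Chart X)} {l : X → ℕ} {g : Chart X → ℕ → X} {a b : Chart X} {x x' : X}

theorem eq_of_apply_eq (h : T.IsCoding A l g) (ha : a ∈ A) (hb : b ∈ A)
    (hab : g a (l x) = g b (l x')) : x = x' :=
  h.injective ((h.isRay a ha).eq_of_apply_eq (h.isRay b hb) hab)

/-- The single chart which carries, along every coding ray at once, the relation coded by it. -/
def chart (h : T.IsCoding A l g) : Chart X where
  rel := {q | ∃ a ∈ A, ∃ x y, (x, y) ∈ a.rel ∧ q = (g a (l x), g a (l y))}
  functional := by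
    rintro v w w' ⟨a, ha, x, y, hxy, hq⟩ ⟨b, hb, x', y', hxy', hq'⟩
    simp only [Prod.mk.injEq] at hq hq'
    have hg : g a (l x) = g b (l x') := hq.1.symm.trans hq'.1
    obtain rfl : x = x' := h.eq_of_apply_eq ha hb hg
    obtain ⟨hb', -, hy⟩ := h.agree a ha b hb x y hxy (.inl hg)
    rw [hq.2, hq'.2, hy, b.functional hb' hxy']
  injective := by
    rintro v v' w ⟨a, ha, x, y, hxy, hq⟩ ⟨b, hb, x', y', hxy', hq'⟩
    simp only [Prod.mk.injEq] at hq hq'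
    have hg : g a (l y) = g b (l y') := hq.2.symm.trans hq'.2
    obtain rfl : y = y' := h.eq_of_apply_eq ha hb hg
    obtain ⟨hb', hx, -⟩ := h.agree a ha b hb x y hxy (.inr hg)
    rw [hq.1, hq'.1, hx, b.injective hb' hxy']

theorem mem_chart (h : T.IsCoding A l g) (ha : a ∈ A) {x y : X} :
    (g a (l x), g a (l y)) ∈ h.chart.rel ↔ (x, y) ∈ a.rel := by
  refine ⟨?_, fun hxy => ⟨a, ha, x, y, hxy, rfl⟩⟩
  rintro ⟨b, hb, x', y', hxy, hq⟩
  simp only [Prod.mk.injEq] at hq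
  obtain rfl : x = x' := h.eq_of_apply_eq ha hb hq.1
  obtain rfl : y = y' := h.eq_of_apply_eq ha hb hq.2
  exact (h.agree b hb a ha x y hxy (.inl hq.1.symm)).1

/-- Fix one ray `p`. Placing `x` on `p` at level `l x`, a chart `a` is: move `p` to the ray of `a`,
apply the common chart `h.chart`, and move back to `p`. -/
theorem bsleq (h : T.IsCoding A l g) : BSleq A (pathSg T) := by
  rcases A.eq_empty_or_nonempty with rfl | ⟨a₀, ha₀⟩
  · exact .of_subset (empty_subset _)
  have hp := h.isRay a₀ ha₀
  have hplace : (fun x => g a₀ (l x)).Injective := fun x y hxy => h.eq_of_apply_eq ha₀ ha₀ hxy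
  suffices hA : BSleq A (Sgen (pathSg T ∪ {h.chart})) from
    (hA.trans .of_sgen).trans (.union_countable (countable_singleton _))
  refine .of_injective hplace hplace fun a ha => ?_
  have ha' := h.isRay a ha
  have hpath : ∀ f ∈ pathSg T, InGen (pathSg T ∪ {h.chart}) f := fun f hf => .base (.inl hf)
  refine ⟨hp.chart ha' * (h.chart * ha'.chart hp), .mul (hpath _ (hp.chart_mem_pathSg ha'))
    (.mul (.base (.inr rfl)) (hpath _ (ha'.chart_mem_pathSg hp))), fun x y => ?_⟩
  simp only [Chart.mem_mul, hp.mem_chart_left, ha'.mem_chart_right, exists_eq_left,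
    exists_eq_right, h.mem_chart ha]

end IsCoding

end RTree

/-! ### Words coded by rays -/

theorem exists_seq_of_causal {α : Type*} (a : α) (G : (ℕ → α) → ℕ → α)
    (hG : ∀ f g n, (∀ m ≤ n, f m = g m) → G f n = G g n) :
    ∃ f : ℕ → α, f 0 = a ∧ ∀ n, f (n + 1) = G f n := by
  classical
  let F : ℕ → ℕ → α := Nat.rec (fun _ => a) fun n f k => if k ≤ n then f k else G f n
  have hF : ∀ n k, F (n + 1) k = if k ≤ n then F n k else G (F n) n := fun _ _ => rfl
  have hstable : ∀ m n, m ≤ n → F m m = F n m := by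
    intro m n hmn
    induction n, hmn using Nat.le_induction with
    | base => rfl
    | succ n hmn ih => rw [ih, hF, if_pos hmn]
  refine ⟨fun n => F n n, rfl, fun n => ?_⟩
  change F (n + 1) (n + 1) = _
  rw [hF, if_neg (Nat.not_succ_le_self n)]
  exact hG _ _ n fun m hm => (hstable m n hm).symm

namespace RTree

variable {X : Type u} {T : RTree X} {x y : X} {n m k i : ℕ}

/-- A tree without leaves. -/
def IsPruned (T : RTree X) : Prop := ∀ x ∈ T.verts, (T.children x).Nonempty

theorem IsPruned.exists_anc_level_eq (hT : T.IsPruned) (hx : x ∈ T.verts) (hm : T.level x ≤ m) :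
    ∃ w ∈ T.verts, T.anc x w ∧ T.level w = m := by
  induction m, hm using Nat.le_induction with
  | base => exact ⟨x, hx, anc_refl x, rfl⟩
  | succ m _ ih =>
    obtain ⟨w, hw, hxw, hl⟩ := ih
    obtain ⟨z, hz⟩ := hT w hw
    exact ⟨z, hz.1, hxw.trans (anc_of_mem_children hz), by rw [level_of_mem_children hz, hl]⟩

/-- A chosen descendant of `x` at level `m` (an arbitrary point if there is none). -/
noncomputable def extend (T : RTree X) (x : X) (m : ℕ) : X :=
  @Classical.epsilon X ⟨T.root⟩ fun w => w ∈ T.verts ∧ T.anc x w ∧ T.level w = m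

theorem IsPruned.extend_spec (hT : T.IsPruned) (hx : x ∈ T.verts) (hm : T.level x ≤ m) :
    T.extend x m ∈ T.verts ∧ T.anc x (T.extend x m) ∧ T.level (T.extend x m) = m :=
  Classical.epsilon_spec (hT.exists_anc_level_eq hx hm)

/-- Data for coding words over the alphabet `ι` by rays of `T`. A letter has a rank, `letters n`
are the letters that may follow a letter of rank `n` (or start the word, for `n = 0`), and a vertex
`y` at which a finite word of last rank `n` has been coded has pairwise different descendants
`branch y n q` at level `branchLevel y n`, one for each possible next letter `q`. -/
structure WordScheme (T : RTree X) (ι : Type*) where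
  rank : ι → ℕ
  letters : ℕ → Set ι
  branchLevel : X → ℕ → ℕ
  branch : X → ℕ → ι → X
  lt_rank : ∀ n, ∀ q ∈ letters n, n < rank q
  finite_letters : ∀ n m, {q ∈ letters n | rank q = m}.Finite
  branch_spec : ∀ y ∈ T.verts, ∀ n, ∀ q ∈ letters n,
    branch y n q ∈ T.verts ∧ T.anc y (branch y n q) ∧ T.level (branch y n q) = branchLevel y n
  injOn_branch : ∀ y ∈ T.verts, ∀ n, InjOn (branch y n) (letters n)

namespace WordScheme

variable {ι : Type*} (W : WordScheme T ι) {lev lev' : ℕ → ℕ} {q q' : ℕ → ι}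

/-- The vertex coding the letter `q` after `y`: go to the branch of `q`, then on to the level
reserved for the rank of `q`. -/
noncomputable def next (lev : ℕ → ℕ) (y : X) (n : ℕ) (q : ι) : X :=
  T.extend (W.branch y n q) (lev (W.rank q))

/-- `W.Reachable lev n y`: the vertex `y` codes a finite word whose last letter has rank `n`. -/
inductive Reachable (lev : ℕ → ℕ) : ℕ → X → Prop
  | root : Reachable lev 0 T.root
  | next {n : ℕ} {y : X} {q : ι} : Reachable lev n y → q ∈ W.letters n →
      Reachable lev (W.rank q) (W.next lev y n q)

theorem finite_reachable (lev : ℕ → ℕ) (n : ℕ) : {y | W.Reachable lev n y}.Finite := by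
  induction n using Nat.strong_induction_on with
  | _ n ih =>
    have hfin : (⋃ m ∈ Iio n, ⋃ y ∈ {y | W.Reachable lev m y},
        W.next lev y m '' {q ∈ W.letters m | W.rank q = n}).Finite :=
      (finite_Iio n).biUnion fun m hm => (ih m hm).biUnion fun y _ => (W.finite_letters m n).image _
    refine (hfin.insert T.root).subset ?_
    rintro _ (_ | ⟨hy, hq⟩)
    · exact mem_insert _ _
    · exact .inr (mem_biUnion (W.lt_rank _ _ hq) (mem_biUnion hy ⟨_, ⟨hq, rfl⟩, rfl⟩))

theorem Reachable.congr {W : WordScheme T ι} (h : W.Reachable lev n y)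
    (hlev : ∀ m ≤ n, lev m = lev' m) : W.Reachable lev' n y := by
  induction h with
  | root => exact .root
  | next _ hq ih =>
    rw [WordScheme.next, hlev _ le_rfl]
    exact .next (ih fun m hm => hlev m (hm.trans (W.lt_rank _ _ hq).le)) hq

/-- Levels `lev n` reserved for the vertices coding words of last rank `n`, together with a bound
`demand n` for the levels at which the next branching above such a vertex takes place. -/
structure Layout where
  lev : ℕ → ℕ
  demand : ℕ → ℕ
  lev_zero : lev 0 = 0
  add_lt_lev_succ : ∀ n, lev n + demand n < lev (n + 1)
  branchLevel_le : ∀ n y, W.Reachable lev n y → W.branchLevel y n ≤ demand n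

/-- The levels are chosen one rank at a time: which vertices are reachable at rank `n` depends
only on the levels up to `n`, and they are finite in number. -/
theorem exists_layout (size : ℕ → ℕ) :
    ∃ L : W.Layout, ∀ n, L.lev n + L.demand n + size n < L.lev (n + 1) := by
  let demand (lev : ℕ → ℕ) (n : ℕ) : ℕ := sSup ((W.branchLevel · n) '' {y | W.Reachable lev n y})
  have hcausal : ∀ lev lev' : ℕ → ℕ, ∀ n, (∀ m ≤ n, lev m = lev' m) →
      lev n + demand lev n + size n + 1 = lev' n + demand lev' n + size n + 1 := by
    intro lev lev' n h
    have hset : {y | W.Reachable lev n y} = {y | W.Reachable lev' n y} :=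
      Set.ext fun y => ⟨fun hy => hy.congr h, fun hy => hy.congr fun m hm => (h m hm).symm⟩
    simp only [demand, hset, h n le_rfl]
  obtain ⟨lev, hzero, hsucc⟩ := exists_seq_of_causal 0 _ hcausal
  refine ⟨⟨lev, demand lev, hzero, fun n => ?_, fun n y hy => ?_⟩, fun n => ?_⟩
  · rw [hsucc]
    omega
  · exact le_csSup ((W.finite_reachable lev n).image _).bddAbove (mem_image_of_mem _ hy)
  · exact Nat.lt_of_succ_le (hsucc n).ge

/-- The rank of the last letter of the initial segment of length `k`, and `0` for the empty one. -/
def lastRank (q : ℕ → ι) : ℕ → ℕ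
  | 0 => 0
  | k + 1 => W.rank (q k)

/-- An infinite word all of whose letters are allowed at their position. -/
def IsWord (q : ℕ → ι) : Prop := ∀ k, q k ∈ W.letters (W.lastRank q k)

namespace Layout

variable {W} (L : W.Layout)

theorem strictMono_lev : StrictMono L.lev :=
  strictMono_nat_of_lt_succ fun n => (Nat.le_add_right _ _).trans_lt (L.add_lt_lev_succ n)

theorem add_demand_le_lev (h : n < m) : L.lev n + L.demand n ≤ L.lev m :=
  (L.add_lt_lev_succ n).le.trans (L.strictMono_lev.monotone h)

theorem monotone_lev_add_demand : Monotone fun n => L.lev n + L.demand n :=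
  monotone_nat_of_le_succ fun n => (L.add_demand_le_lev n.lt_succ_self).trans (Nat.le_add_right _ _)

/-- The vertex coding the initial segment of length `k` of the word `q`. -/
noncomputable def vertex (q : ℕ → ι) : ℕ → X
  | 0 => T.root
  | k + 1 => W.next L.lev (vertex q k) (W.lastRank q k) (q k)

/-- The sequence of vertices of the ray coding the word `q`. -/
noncomputable def ray (q : ℕ → ι) (i : ℕ) : X := T.ancAt (L.vertex q i) i

variable {L}

theorem reachable_vertex (hq : W.IsWord q) (k : ℕ) :
    W.Reachable L.lev (W.lastRank q k) (L.vertex q k) := by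
  induction k with
  | zero => exact .root
  | succ k ih => exact .next ih (hq k)

theorem next_spec (hT : T.IsPruned) (hy : y ∈ T.verts) (hr : W.Reachable L.lev n y)
    {c : ι} (hc : c ∈ W.letters n) :
    W.next L.lev y n c ∈ T.verts ∧ T.anc (W.branch y n c) (W.next L.lev y n c) ∧
      T.level (W.next L.lev y n c) = L.lev (W.rank c) := by
  obtain ⟨hmem, -, hlevel⟩ := W.branch_spec y hy n c hc
  refine hT.extend_spec hmem ?_
  rw [hlevel]
  exact (L.branchLevel_le n y hr).trans
    ((Nat.le_add_left _ _).trans (L.add_demand_le_lev (W.lt_rank n c hc)))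

theorem vertex_mem (hT : T.IsPruned) (hq : W.IsWord q) (k : ℕ) : L.vertex q k ∈ T.verts := by
  induction k with
  | zero => exact T.root_mem
  | succ k ih => exact (next_spec hT ih (reachable_vertex hq k) (hq k)).1

theorem anc_branch_vertex (hT : T.IsPruned) (hq : W.IsWord q) (k : ℕ) :
    T.anc (W.branch (L.vertex q k) (W.lastRank q k) (q k)) (L.vertex q (k + 1)) :=
  (next_spec hT (vertex_mem hT hq k) (reachable_vertex hq k) (hq k)).2.1

theorem anc_vertex_succ (hT : T.IsPruned) (hq : W.IsWord q) (k : ℕ) :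
    T.anc (L.vertex q k) (L.vertex q (k + 1)) :=
  (W.branch_spec _ (vertex_mem hT hq k) _ _ (hq k)).2.1.trans (anc_branch_vertex hT hq k)

theorem level_vertex (hT : T.IsPruned) (hq : W.IsWord q) (k : ℕ) :
    T.level (L.vertex q k) = L.lev (W.lastRank q k) := by
  cases k with
  | zero => exact level_root.trans L.lev_zero.symm
  | succ k => exact (next_spec hT (vertex_mem hT hq k) (reachable_vertex hq k) (hq k)).2.2

theorem strictMono_lastRank (hq : W.IsWord q) : StrictMono (W.lastRank q) :=
  strictMono_nat_of_lt_succ fun k => W.lt_rank _ _ (hq k)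

theorem le_level_vertex (hT : T.IsPruned) (hq : W.IsWord q) (k : ℕ) :
    k ≤ T.level (L.vertex q k) := by
  rw [level_vertex hT hq]
  exact (L.strictMono_lev.comp (strictMono_lastRank hq)).le_apply

theorem isRay_ray (hT : T.IsPruned) (hq : W.IsWord q) : T.IsRay (L.ray q) :=
  isRay_of_chain (vertex_mem hT hq) (anc_vertex_succ hT hq) (le_level_vertex hT hq)

theorem ray_level_of_anc (hT : T.IsPruned) (hq : W.IsWord q) (hx : T.anc x (L.vertex q k)) :
    L.ray q (T.level x) = x := by
  have hk := vertex_mem (L := L) hT hq k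
  rw [ray, ancAt_eq_of_chain (vertex_mem hT hq) (anc_vertex_succ hT hq) (le_level_vertex hT hq)
    (hx.level_le hk), hx.ancAt_level hk]

theorem vertex_congr (h : ∀ j < k, q j = q' j) :
    W.lastRank q k = W.lastRank q' k ∧ L.vertex q k = L.vertex q' k := by
  induction k with
  | zero => exact ⟨rfl, rfl⟩
  | succ k ih =>
    obtain ⟨hr, hv⟩ := ih fun j hj => h j (hj.trans k.lt_succ_self)
    rw [lastRank, lastRank, vertex, vertex, hr, hv, h k k.lt_succ_self]
    exact ⟨rfl, rfl⟩

theorem ray_eq_of_agree (hT : T.IsPruned) (hq : W.IsWord q) (hq' : W.IsWord q')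
    (h : ∀ j < k, q j = q' j) (hi : i ≤ L.lev (W.lastRank q k)) : L.ray q i = L.ray q' i := by
  have hlevel : T.level (T.ancAt (L.vertex q k) i) = i :=
    level_ancAt (vertex_mem hT hq k) (by rwa [level_vertex hT hq])
  have hanc : T.anc (T.ancAt (L.vertex q k) i) (L.vertex q' k) := by
    rw [← (vertex_congr h).2]
    exact anc_ancAt _ _
  rw [← hlevel, ray_level_of_anc hT hq (anc_ancAt _ _), ray_level_of_anc hT hq' hanc]

theorem apply_eq_of_ray_eq_of_agree (hT : T.IsPruned) (hq : W.IsWord q) (hq' : W.IsWord q')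
    (hagree : ∀ j < k, q j = q' j) (hi : L.demand (W.lastRank q k) ≤ i)
    (h : L.ray q i = L.ray q' i) : q k = q' k := by
  obtain ⟨hr, hv⟩ := vertex_congr (L := L) hagree
  have hy := vertex_mem (L := L) hT hq k
  have hk' : q' k ∈ W.letters (W.lastRank q k) := hr ▸ hq' k
  have hbranch := ray_level_of_anc hT hq (anc_branch_vertex (L := L) hT hq k)
  have hbranch' := ray_level_of_anc hT hq' (anc_branch_vertex (L := L) hT hq' k)
  rw [(W.branch_spec _ hy _ _ (hq k)).2.2] at hbranch
  rw [← hr, ← hv, (W.branch_spec _ hy _ _ hk').2.2] at hbranch'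
  refine W.injOn_branch _ hy _ (hq k) hk' ?_
  rw [← hbranch, ← hbranch']
  exact (isRay_ray hT hq).eq_of_le (isRay_ray hT hq') h
    ((L.branchLevel_le _ _ (reachable_vertex hq k)).trans hi)

theorem agree_of_ray_eq (hT : T.IsPruned) (hq : W.IsWord q) (hq' : W.IsWord q')
    (hi : L.lev (W.lastRank q k) + L.demand (W.lastRank q k) ≤ i)
    (h : L.ray q i = L.ray q' i) : ∀ j ≤ k, q j = q' j := by
  intro j
  induction j using Nat.strong_induction_on with
  | _ j ih =>
    intro hj
    refine apply_eq_of_ray_eq_of_agree hT hq hq' (fun j' hj' => ih j' hj' (hj'.le.trans hj)) ?_ h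
    have := L.monotone_lev_add_demand ((strictMono_lastRank hq).monotone hj)
    exact (Nat.le_add_left _ _).trans (this.trans hi)

end Layout

end WordScheme

end RTree

/-! ### Block charts -/

theorem exists_le_lt_succ_of_strictMono {n : ℕ → ℕ} (hn : StrictMono n) (h0 : n 0 = 0) (i : ℕ) :
    ∃ k, n k ≤ i ∧ i < n (k + 1) := by
  have hi : i ∈ ⋃ k, Ico (n k) (n (Order.succ k)) := by
    rw [iUnion_Ico_map_succ_eq_Ici (fun k => hn.monotone (Nat.zero_le k))
      hn.not_bddAbove_range_of_isSuccArchimedean]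
    exact h0.symm ▸ Nat.zero_le i
  exact mem_iUnion.mp hi

section BlockCharts

variable {X : Type u} {π : X → ℕ} {R : ℕ → ℕ → Prop}

/-- The pairs of points whose values under `π` are both less than `n`. -/
def square (π : X → ℕ) (n : ℕ) : Set (X × X) := {p | π p.1 < n ∧ π p.2 < n}

theorem finite_square (hπ : ∀ n, {x | π x = n}.Finite) (n : ℕ) : (square π n).Finite := by
  have hlt : {x | π x < n}.Finite := (finite_lt_nat n).preimage' fun m _ => hπ m
  exact hlt.prod hlt

/-- The charts which preserve each block `{x | n k ≤ π x < n (k + 1)}` of a decomposition of `X`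
whose consecutive endpoints are related by `R`. -/
def blockCharts (π : X → ℕ) (R : ℕ → ℕ → Prop) : Set (Chart X) :=
  {a | ∃ n : ℕ → ℕ, n 0 = 0 ∧ (∀ k, R (n k) (n (k + 1))) ∧
    ∀ x y, (x, y) ∈ a.rel → ∀ k, (π x < n k ↔ π y < n k)}

/-- The letters used to code block charts: the next endpoint of the block decomposition,
together with the part of the chart below that endpoint. -/
def blockLetters (π : X → ℕ) (R : ℕ → ℕ → Prop) (n : ℕ) : Set (ℕ × Set (X × X)) :=
  {q | R n q.1 ∧ q.2 ⊆ square π q.1}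

/-- The word coding the chart `a` with block endpoints `n`. -/
def blockWord (π : X → ℕ) (a : Chart X) (n : ℕ → ℕ) (k : ℕ) : ℕ × Set (X × X) :=
  (n (k + 1), a.rel ∩ square π (n (k + 1)))

theorem finite_blockLetters_rank (hπ : ∀ n, {x | π x = n}.Finite) (n m : ℕ) :
    {q ∈ blockLetters π R n | q.1 = m}.Finite := by
  refine ((finite_square hπ m).finite_subsets.image (Prod.mk m)).subset ?_
  rintro ⟨m, c⟩ ⟨⟨-, hc⟩, rfl⟩
  exact ⟨c, hc, rfl⟩

theorem countable_blockLetters (hπ : ∀ n, {x | π x = n}.Finite) (n : ℕ) :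
    (blockLetters π R n).Countable := by
  refine (countable_iUnion fun m =>
    (finite_blockLetters_rank (R := R) hπ n m).countable).mono fun q hq => ?_
  exact mem_iUnion.mpr ⟨q.1, hq, rfl⟩

end BlockCharts

namespace RTree

variable {X : Type u} {T : RTree X} {ι : Type*}

/-- Above every vertex the tree splits into distinct vertices of a common level indexed by `s`. -/
def Splits (T : RTree X) (s : Set ι) : Prop :=
  ∀ y ∈ T.verts, ∃ (m : ℕ) (b : ι → X),
    (∀ q ∈ s, b q ∈ T.verts ∧ T.anc y (b q) ∧ T.level (b q) = m) ∧ InjOn b s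

theorem WordScheme.exists_of_splits {rank : ι → ℕ} {letters : ℕ → Set ι}
    (hlt : ∀ n, ∀ q ∈ letters n, n < rank q)
    (hfin : ∀ n m, {q ∈ letters n | rank q = m}.Finite)
    (hsplits : ∀ n, T.Splits (letters n)) :
    ∃ W : WordScheme T ι, W.rank = rank ∧ W.letters = letters := by
  have : Nonempty X := ⟨T.root⟩
  choose! m b hb hinj using hsplits
  exact ⟨⟨rank, letters, fun y n => m n y, fun y n => b n y, hlt, hfin,
    fun y hy n => hb n y hy, fun y hy n => hinj n y hy⟩, rfl, rfl⟩

section Place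

variable {π : X → ℕ} {W : WordScheme T ι} (L : W.Layout) (ε : X → ℕ)

/-- The level at which the rays coding charts record the image of `x`. -/
def WordScheme.Layout.place (π : X → ℕ) (x : X) : ℕ := L.lev (π x) + L.demand (π x) + ε x

variable {L ε}

theorem WordScheme.Layout.place_lt_lev (hε : ∀ x, L.place ε π x < L.lev (π x + 1)) {x : X} {n : ℕ}
    (hx : π x < n) : L.place ε π x < L.lev n :=
  (hε x).trans_le (L.strictMono_lev.monotone hx)

theorem WordScheme.Layout.place_injective (hinj : ε.Injective)
    (hε : ∀ x, L.place ε π x < L.lev (π x + 1)) : (L.place ε π).Injective := by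
  have hle : ∀ {x y}, L.place ε π x = L.place ε π y → π y ≤ π x := fun {x y} h => by
    by_contra! hlt
    have hplace := place_lt_lev hε hlt
    rw [h, place] at hplace
    omega
  intro x y h
  have hπ : π x = π y := le_antisymm (hle h.symm) (hle h)
  rw [place, place, hπ] at h
  exact hinj (Nat.add_left_cancel h)

theorem WordScheme.exists_layout_place [Countable X] (W : WordScheme T ι)
    (hπ : ∀ n, {x | π x = n}.Finite) :
    ∃ (L : W.Layout) (ε : X → ℕ), ε.Injective ∧ ∀ x, L.place ε π x < L.lev (π x + 1) := by
  obtain ⟨ε, hε⟩ := exists_injective_nat X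
  obtain ⟨L, hL⟩ := W.exists_layout fun n => sSup (ε '' {x | π x = n})
  refine ⟨L, ε, hε, fun x => lt_of_le_of_lt ?_ (hL (π x))⟩
  exact Nat.add_le_add_left
    (le_csSup ((hπ (π x)).image ε).bddAbove (mem_image_of_mem ε rfl)) _

end Place

section BlockWord

variable {π : X → ℕ} {R : ℕ → ℕ → Prop} {W : WordScheme T (ℕ × Set (X × X))} {a : Chart X}
  {n : ℕ → ℕ}

theorem lastRank_blockWord (hrank : W.rank = Prod.fst) (h0 : n 0 = 0) (k : ℕ) :
    W.lastRank (blockWord π a n) k = n k := by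
  cases k with
  | zero => exact h0.symm
  | succ k => exact congrFun hrank _

theorem isWord_blockWord (hrank : W.rank = Prod.fst) (hletters : W.letters = blockLetters π R)
    (h0 : n 0 = 0) (hn : ∀ k, R (n k) (n (k + 1))) : W.IsWord (blockWord π a n) := by
  intro k
  rw [lastRank_blockWord hrank h0, hletters]
  exact ⟨hn k, inter_subset_right⟩

variable {L : W.Layout} {ε : X → ℕ} {k : ℕ} {z : X} {q : ℕ → ℕ × Set (X × X)}

theorem agree_of_ray_place_eq (hT : T.IsPruned) (hrank : W.rank = Prod.fst) (h0 : n 0 = 0)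
    (ha : W.IsWord (blockWord π a n)) (hq : W.IsWord q) (hz : n k ≤ π z)
    (h : L.ray (blockWord π a n) (L.place ε π z) = L.ray q (L.place ε π z)) :
    ∀ j ≤ k, blockWord π a n j = q j := by
  refine WordScheme.Layout.agree_of_ray_eq hT ha hq ?_ h
  rw [lastRank_blockWord hrank h0]
  exact (L.monotone_lev_add_demand hz).trans (Nat.le_add_right _ _)

theorem ray_place_eq_of_agree (hT : T.IsPruned) (hrank : W.rank = Prod.fst)
    (hε : ∀ x, L.place ε π x < L.lev (π x + 1)) (h0 : n 0 = 0)
    (ha : W.IsWord (blockWord π a n)) (hq : W.IsWord q) (h : ∀ j ≤ k, blockWord π a n j = q j)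
    (hz : π z < n (k + 1)) :
    L.ray (blockWord π a n) (L.place ε π z) = L.ray q (L.place ε π z) := by
  refine WordScheme.Layout.ray_eq_of_agree hT ha hq (fun j hj => h j (Nat.le_of_lt_succ hj)) ?_
  rw [lastRank_blockWord hrank h0]
  exact (WordScheme.Layout.place_lt_lev hε hz).le

end BlockWord

/-- A chart preserving blocks is coded by the word of its restrictions to initial blocks, and
two rays that meet far enough up have these restrictions in common. -/
theorem bsleq_blockCharts [Countable X] (hT : T.IsPruned) {π : X → ℕ}
    (hπ : ∀ n, {x | π x = n}.Finite) {R : ℕ → ℕ → Prop} (hR : ∀ n m, R n m → n < m)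
    (hsplits : ∀ n, T.Splits (blockLetters π R n)) : BSleq (blockCharts π R) (pathSg T) := by
  obtain ⟨W, hrank, hletters⟩ := WordScheme.exists_of_splits (rank := Prod.fst)
    (fun n q hq => hR n q.1 hq.1) (finite_blockLetters_rank hπ) hsplits
  obtain ⟨L, ε, hinj, hε⟩ := W.exists_layout_place hπ
  have hA : ∀ a ∈ blockCharts π R, ∃ n : ℕ → ℕ, n 0 = 0 ∧ (∀ k, R (n k) (n (k + 1))) ∧
    ∀ x y, (x, y) ∈ a.rel → ∀ k, (π x < n k ↔ π y < n k) := fun a ha => ha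
  choose! n h0 hn hblock using hA
  have hword : ∀ a ∈ blockCharts π R, W.IsWord (blockWord π a (n a)) := fun a ha =>
    isWord_blockWord hrank hletters (h0 a ha) (hn a ha)
  refine IsCoding.bsleq (l := L.place ε π) (g := fun a => L.ray (blockWord π a (n a)))
    ⟨WordScheme.Layout.place_injective hinj hε,
      fun a ha => WordScheme.Layout.isRay_ray hT (hword a ha), fun a ha b hb x y hxy hmeet => ?_⟩
  have hmono : StrictMono (n a) := strictMono_nat_of_lt_succ fun k => hR _ _ (hn a ha k)
  obtain ⟨k, hxk, hxk'⟩ := exists_le_lt_succ_of_strictMono hmono (h0 a ha) (π x)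
  have hyk : n a k ≤ π y := not_lt.mp fun hy => hxk.not_gt ((hblock a ha x y hxy k).mpr hy)
  have hyk' : π y < n a (k + 1) := (hblock a ha x y hxy (k + 1)).mp hxk'
  have hagree : ∀ j ≤ k, blockWord π a (n a) j = blockWord π b (n b) j := hmeet.elim
    (agree_of_ray_place_eq hT hrank (h0 a ha) (hword a ha) (hword b hb) hxk)
    (agree_of_ray_place_eq hT hrank (h0 a ha) (hword a ha) (hword b hb) hyk)
  have hrestrict : a.rel ∩ square π (n a (k + 1)) = b.rel ∩ square π (n b (k + 1)) :=
    congrArg Prod.snd (hagree k le_rfl)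
  have hxyb : (x, y) ∈ b.rel ∩ square π (n b (k + 1)) := hrestrict ▸ ⟨hxy, hxk', hyk'⟩
  exact ⟨hxyb.1,
    ray_place_eq_of_agree hT hrank hε (h0 a ha) (hword a ha) (hword b hb) hagree hxk',
    ray_place_eq_of_agree hT hrank hε (h0 a ha) (hword a ha) (hword b hb) hagree hyk'⟩

end RTree

namespace Chart

variable {X : Type u} {i j : X → X}

/-- The chart taking `i x` to `j y` for the pairs `(x, y)` of `f` satisfying `D`, and fixing `i x`
for the others. -/
def shift (hi : i.Injective) (hj : j.Injective) (hij : ∀ x y, i x ≠ j y) (f : Chart X)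
    (D : X → X → Prop) : Chart X where
  rel := {p | ∃ x y, (x, y) ∈ f.rel ∧ (D x y ∧ p = (i x, j y) ∨ ¬D x y ∧ p = (i x, i x))}
  functional := by
    rintro v w w' ⟨x, y, hxy, h⟩ ⟨x', y', hxy', h'⟩
    simp only [Prod.mk.injEq] at h h'
    obtain rfl : x = x' := hi (by grind)
    obtain rfl : y = y' := f.functional hxy hxy'
    grind
  injective := by
    rintro v v' w ⟨x, y, hxy, h⟩ ⟨x', y', hxy', h'⟩
    simp only [Prod.mk.injEq] at h h'
    rcases h with ⟨-, rfl, rfl⟩ | ⟨-, rfl, rfl⟩ <;> rcases h' with ⟨-, rfl, h'⟩ | ⟨-, rfl, h'⟩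
    · obtain rfl := hj h'
      rw [f.injective hxy hxy']
    · exact absurd h'.symm (hij x' y)
    · exact absurd h' (hij x y')
    · exact h'

theorem mem_shift_mul_inv_shift (hi : i.Injective) (hj : j.Injective) (hij : ∀ x y, i x ≠ j y)
    (f : Chart X) (D : X → X → Prop) {x y : X} :
    (i x, j y) ∈ (shift hi hj hij f D *
      (shift hj hi (fun x y => (hij y x).symm) f⁻¹ fun y x => ¬D x y)⁻¹).rel ↔
      (x, y) ∈ f.rel := by
  constructor
  · rintro ⟨z, ⟨x₁, y₁, h₁, h⟩, ⟨y₂, x₂, h₂, h'⟩⟩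
    simp only [Prod.mk.injEq, not_not] at h h'
    obtain rfl : x = x₁ := hi (by grind)
    obtain rfl : y = y₂ := hj (by grind)
    rcases h with ⟨-, -, rfl⟩ | ⟨-, -, rfl⟩ <;> rcases h' with ⟨-, -, h'⟩ | ⟨-, -, h'⟩
    · exact absurd h'.symm (hij x₂ y₁)
    · exact hj h' ▸ h₁
    · exact hi h' ▸ h₂
    · exact absurd h' (hij x y)
  · intro h
    by_cases hD : D x y
    · exact ⟨j y, ⟨x, y, h, .inl ⟨hD, rfl⟩⟩, ⟨y, x, h, .inr ⟨not_not.mpr hD, rfl⟩⟩⟩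
    · exact ⟨i x, ⟨x, y, h, .inr ⟨hD, rfl⟩⟩, ⟨y, x, h, .inl ⟨hD, rfl⟩⟩⟩

end Chart

section Univ

variable {X : Type u} {π : X → ℕ} {R : ℕ → ℕ → Prop} {f : Chart X}

theorem inv_mem_blockCharts (hf : f ∈ blockCharts π R) : f⁻¹ ∈ blockCharts π R := by
  obtain ⟨n, h0, hn, hf⟩ := hf
  exact ⟨n, h0, hn, fun x y hxy k => (hf y x hxy k).symm⟩

theorem shift_mem_blockCharts {i j : X → X} (hi : i.Injective) (hj : j.Injective)
    (hij : ∀ x y, i x ≠ j y) {D : X → X → Prop} {n : ℕ → ℕ} (h0 : n 0 = 0)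
    (hn : ∀ k, R (n k) (n (k + 1)))
    (hD : ∀ x y, (x, y) ∈ f.rel → D x y → ∀ k, (π (i x) < n k ↔ π (j y) < n k)) :
    Chart.shift hi hj hij f D ∈ blockCharts π R := by
  refine ⟨n, h0, hn, ?_⟩
  rintro _ _ ⟨x, y, hxy, ⟨h, hp⟩ | ⟨-, hp⟩⟩ k <;>
    obtain ⟨rfl, rfl⟩ := Prod.mk.injEq .. ▸ hp
  · exact hD x y hxy h k
  · rfl

theorem Chart.exists_bound (f : Chart X) (hπ : ∀ n, {x | π x = n}.Finite) (N : ℕ) :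
    ∃ M, N < M ∧ ∀ x y, (x, y) ∈ f.rel → (π x < N → π y < M) ∧ (π y < N → π x < M) := by
  have hlt : {x | π x < N}.Finite := (finite_lt_nat N).preimage' fun m _ => hπ m
  have hfst : {p ∈ f.rel | π p.1 < N}.Finite :=
    Finite.of_injOn (f := Prod.fst) (fun p hp => hp.2)
      (fun p hp p' hp' h => Prod.ext h (f.functional hp.1 (h ▸ hp'.1))) hlt
  have hsnd : {p ∈ f.rel | π p.2 < N}.Finite :=
    Finite.of_injOn (f := Prod.snd) (fun p hp => hp.2)
      (fun p hp p' hp' h => Prod.ext (f.injective hp.1 (h ▸ hp'.1)) h) hlt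
  obtain ⟨M₁, hM₁⟩ := (hfst.image fun p => π p.2).bddAbove
  obtain ⟨M₂, hM₂⟩ := (hsnd.image fun p => π p.1).bddAbove
  refine ⟨N + M₁ + M₂ + 1, by omega, fun x y hxy => ⟨fun hx => ?_, fun hy => ?_⟩⟩
  · have : π y ≤ M₁ := hM₁ ⟨(x, y), ⟨hxy, hx⟩, rfl⟩
    omega
  · have : π x ≤ M₂ := hM₂ ⟨(x, y), ⟨hxy, hy⟩, rfl⟩
    omega

theorem Chart.exists_endpoints (f : Chart X) (hπ : ∀ n, {x | π x = n}.Finite) :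
    ∃ n : ℕ → ℕ, n 0 = 0 ∧ StrictMono n ∧ ∀ x y, (x, y) ∈ f.rel → ∀ k,
      (π x < n k → π y < n (k + 1)) ∧ (π y < n k → π x < n (k + 1)) := by
  choose M hlt hM using f.exists_bound hπ
  refine ⟨fun k => M^[k] 0, rfl, strictMono_nat_of_lt_succ fun k => ?_, fun x y hxy k => ?_⟩
  · rw [Function.iterate_succ_apply']
    exact hlt _
  · simp only [Function.iterate_succ_apply']
    exact hM _ x y hxy

theorem lt_iff_lt_of_not_lt_iff_lt {n : ℕ → ℕ} (hn : StrictMono n) {a b k l : ℕ}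
    (h : ∀ k, (a < n k → b < n (k + 1)) ∧ (b < n k → a < n (k + 1)))
    (hk : ¬(a < n k ↔ b < n k)) (hlk : l ≠ k) : a < n l ↔ b < n l := by
  rcases hlk.lt_or_gt with hlt | hgt
  · have := hn.monotone (Nat.succ_le_of_lt hlt)
    have := hn hlt
    have := h l
    grind
  · have := hn.monotone (Nat.succ_le_of_lt hgt)
    have := hn hgt
    have := h k
    grind

/-- Choose endpoints so sparse that `f` moves no point across more than one of them. Then each pair
of `f` crosses either no endpoint of even index or none of odd index, which makes `f`, after
doubling every point, a product of two block charts. -/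
theorem bsleq_univ_blockCharts (e : X ≃ ℕ) :
    BSleq (Set.univ : Set (Chart X)) (blockCharts e (· < ·)) := by
  let i : X → X := fun x => e.symm (2 * e x)
  let j : X → X := fun x => e.symm (2 * e x + 1)
  have hei : ∀ x, e (i x) = 2 * e x := fun x => e.apply_symm_apply _
  have hej : ∀ x, e (j x) = 2 * e x + 1 := fun x => e.apply_symm_apply _
  have hi : i.Injective := fun x y h => e.injective (by have := congrArg e h; grind)
  have hj : j.Injective := fun x y h => e.injective (by have := congrArg e h; grind)
  have hij : ∀ x y, i x ≠ j y := fun x y h => by have := congrArg e h; grind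
  suffices BSleq (Set.univ : Set (Chart X)) (Sgen (blockCharts e (· < ·))) from this.trans .of_sgen
  refine .of_injective hi hj fun f _ => ?_
  obtain ⟨n, h0, hmono, hn⟩ := f.exists_endpoints fun m =>
    Set.Finite.preimage (s := {m}) e.injective.injOn (finite_singleton m)
  let D (x y : X) : Prop := ∀ k, e x < n (2 * k) ↔ e y < n (2 * k)
  refine ⟨_, .mul (.base ?_) (.base (inv_mem_blockCharts ?_)),
    fun x y => (Chart.mem_shift_mul_inv_shift hi hj hij f D).symm⟩
  · refine shift_mem_blockCharts hi hj hij (n := fun k => 2 * n (2 * k)) (by simp [h0])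
      (fun k => ?_) fun x y _ hD k => ?_
    · exact Nat.mul_lt_mul_of_pos_left (hmono (by omega)) two_pos
    · have := hD k
      grind
  · refine shift_mem_blockCharts hj hi _ (n := fun k => 2 * n (2 * k - 1)) (by simp [h0])
      (fun k => ?_) fun y x hyx hD k => ?_
    · exact Nat.mul_lt_mul_of_pos_left (hmono (by omega)) two_pos
    · obtain ⟨k₀, hk₀⟩ := not_forall.mp hD
      have hne : 2 * k - 1 ≠ 2 * k₀ := fun h => by
        obtain rfl : k₀ = 0 := by omega
        simp [h0] at hk₀
      have := lt_iff_lt_of_not_lt_iff_lt hmono (hn x y hyx) hk₀ hne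
      grind

end Univ

/-! ### Branching -/

namespace RTree

variable {X : Type u} {T : RTree X} {ι : Type*} {x y : X}

theorem nbhd_subset (y : X) : T.nbhd y ⊆ insert (T.par y) (T.children y) := by
  rintro z ⟨hz, ⟨hpar, hne⟩ | ⟨hpar, -⟩⟩
  · exact .inr ⟨hz, hpar, hne⟩
  · exact .inl hpar.symm

theorem isPruned_of_forall_exists_children
    (h : ∀ x ∈ T.verts, ∃ y ∈ T.verts, T.anc x y ∧ (T.children y).Nonempty) : T.IsPruned := by
  intro x hx
  obtain ⟨y, hy, hxy, hchild⟩ := h x hx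
  rcases (hxy.level_le hy).eq_or_lt with hl | hl
  · rwa [hxy.eq_of_level_eq hy hl]
  · refine ⟨T.ancAt y (T.level x + 1), ?_⟩
    have := ancAt_mem_children hy hl
    rwa [hxy.ancAt_level hy] at this

theorem infinite_children (hy : (T.nbhd y).Infinite) : (T.children y).Infinite := fun hfin =>
  hy ((hfin.insert (T.par y)).subset (nbhd_subset y))

theorem splits_of_infinite_children
    (h : ∀ x ∈ T.verts, ∃ y ∈ T.verts, T.anc x y ∧ (T.children y).Infinite) {s : Set ι}
    (hs : s.Countable) : T.Splits s := by
  intro x hx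
  obtain ⟨y, -, hxy, hinf⟩ := h x hx
  obtain ⟨ν, hν⟩ := countable_iff_exists_injOn.mp hs
  have hchild : ∀ q, (hinf.natEmbedding _ (ν q) : X) ∈ T.children y := fun q =>
    (hinf.natEmbedding _ (ν q)).2
  refine ⟨T.level y + 1, fun q => hinf.natEmbedding _ (ν q), fun q _ => ⟨(hchild q).1,
    hxy.trans (anc_of_mem_children (hchild q)), level_of_mem_children (hchild q)⟩, ?_⟩
  intro q hq q' hq' heq
  exact hν hq hq' ((hinf.natEmbedding _).injective (Subtype.ext heq))

theorem bsleq_univ_pathSg [Countable X]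
    (h : ∀ x ∈ T.verts, ∃ y ∈ T.verts, T.anc x y ∧ (T.nbhd y).Infinite) :
    BSleq (Set.univ : Set (Chart X)) (pathSg T) := by
  have hinf : ∀ x ∈ T.verts, ∃ y ∈ T.verts, T.anc x y ∧ (T.children y).Infinite := fun x hx =>
    (h x hx).imp fun y ⟨hy, hxy, hy'⟩ => ⟨hy, hxy, infinite_children hy'⟩
  have hpruned : T.IsPruned := isPruned_of_forall_exists_children fun x hx =>
    (hinf x hx).imp fun y ⟨hy, hxy, hy'⟩ => ⟨hy, hxy, hy'.nonempty⟩
  obtain ⟨y, -, -, hy⟩ := h T.root T.root_mem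
  have : Infinite X := Set.infinite_univ_iff.mp (hy.mono (subset_univ _))
  obtain ⟨e⟩ : Nonempty (X ≃ ℕ) := nonempty_equiv_of_countable
  have hfin : ∀ n, {x | e x = n}.Finite := fun n =>
    Set.Finite.preimage (s := {n}) e.injective.injOn (finite_singleton n)
  exact (bsleq_univ_blockCharts e).trans (bsleq_blockCharts hpruned hfin (fun _ _ => id)
    fun n => splits_of_infinite_children hinf (countable_blockLetters hfin n))

/-- A tree in which every vertex has a branching descendant. -/
def IsPerfect (T : RTree X) : Prop :=
  ∀ x ∈ T.verts, ∃ y ∈ T.verts, T.anc x y ∧ (T.children y).Nontrivial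

theorem IsPerfect.isPruned (hT : T.IsPerfect) : T.IsPruned :=
  isPruned_of_forall_exists_children fun x hx =>
    (hT x hx).imp fun _ ⟨hy, hxy, hchild⟩ => ⟨hy, hxy, hchild.nonempty⟩

theorem IsPerfect.splits_insert (hT : T.IsPerfect) {s : Set ι} (hs : T.Splits s)
    (hne : s.Nonempty) {a : ι} (ha : a ∉ s) : T.Splits (insert a s) := by
  classical
  intro y hy
  obtain ⟨z, -, hyz, c, hc, d, hd, hcd⟩ := hT y hy
  obtain ⟨m, b, hb, hinj⟩ := hs c hc.1
  have hlevel : T.level d = T.level c := by rw [level_of_mem_children hc, level_of_mem_children hd]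
  have hm : T.level d ≤ m := by
    obtain ⟨q, hq⟩ := hne
    obtain ⟨hmem, hanc, hbm⟩ := hb q hq
    exact hbm ▸ hlevel ▸ hanc.level_le hmem
  obtain ⟨w, hw, hdw, hwm⟩ := hT.isPruned.exists_anc_level_eq hd.1 hm
  have hupd : ∀ q ∈ s, Function.update b a w q = b q := fun q hq =>
    Function.update_of_ne (ne_of_mem_of_not_mem hq ha) _ _
  refine ⟨m, Function.update b a w, ?_, ?_⟩
  · rintro q (rfl | hq)
    · rw [Function.update_self]
      exact ⟨hw, (hyz.trans (anc_of_mem_children hd)).trans hdw, hwm⟩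
    · rw [hupd q hq]
      exact ⟨(hb q hq).1, (hyz.trans (anc_of_mem_children hc)).trans (hb q hq).2.1, (hb q hq).2.2⟩
  · refine (injOn_insert ha).mpr ⟨hinj.congr fun q hq => (hupd q hq).symm, ?_⟩
    rintro ⟨q, hq, hqw⟩
    rw [hupd q hq, Function.update_self] at hqw
    have hcw : T.anc c w := hqw ▸ (hb q hq).2.1
    exact hcd ((hcw.of_le hdw hw hlevel.ge).eq_of_level_eq hd.1 hlevel.symm)

theorem IsPerfect.splits (hT : T.IsPerfect) {s : Set ι} (hs : s.Finite) : T.Splits s := by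
  induction s, hs using Set.Finite.induction_on with
  | empty => exact fun y _ => ⟨0, fun _ => y, by simp⟩
  | @insert a s ha _ ih =>
    rcases s.eq_empty_or_nonempty with rfl | hne
    · exact fun y hy => ⟨T.level y, fun _ => y, by simp [hy, anc_refl]⟩
    · exact hT.splits_insert ih hne ha

theorem IsPerfect.fiberwise_bsleq [Countable X] (hT : T.IsPerfect) {κ : X → ℕ}
    (hκ : ∀ n, {x | κ x = n}.Finite) :
    BSleq (Chart.fiberwise κ) (pathSg T) := by
  have hsub : Chart.fiberwise κ ⊆ blockCharts κ fun n m => m = n + 1 :=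
    fun f hf => ⟨id, rfl, fun _ => rfl, fun x y hxy k => by rw [hf x y hxy]⟩
  refine (BSleq.of_subset hsub).trans (bsleq_blockCharts hT.isPruned hκ
    (fun n m h => h ▸ n.lt_succ_self) fun n => hT.splits ?_)
  exact (finite_blockLetters_rank hκ n (n + 1)).subset fun q hq => ⟨hq, hq.1⟩

theorem nontrivial_children (hy : 3 ≤ #(T.nbhd y)) : (T.children y).Nontrivial := by
  rw [← not_subsingleton_iff]
  intro hsub
  have hle : #(T.nbhd y) ≤ 2 := calc
    #(T.nbhd y) ≤ #(insert (T.par y) (T.children y) : Set X) := mk_le_mk_of_subset (nbhd_subset y)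
    _ ≤ #(T.children y) + 1 := mk_insert_le
    _ ≤ 1 + 1 := by gcongr; exact mk_le_one_iff_set_subsingleton.mpr hsub
    _ = 2 := one_add_one_eq_two
  exact absurd (hy.trans hle) (by norm_num)

theorem three_le_mk_nbhd (hy : y ∈ T.verts) (hl : T.level y ≠ 0)
    (hchild : (T.children y).Nontrivial) : 3 ≤ #(T.nbhd y) := by
  obtain ⟨c, hc, d, hd, hcd⟩ := hchild
  have hpar : T.level (T.par y) < T.level y := by rw [level_par hy]; omega
  have hparc : T.par y ≠ c := fun h => by rw [h, level_of_mem_children hc] at hpar; omega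
  have hpard : T.par y ≠ d := fun h => by rw [h, level_of_mem_children hd] at hpar; omega
  have hsub : {T.par y, c, d} ⊆ T.nbhd y := by
    rintro z (rfl | rfl | rfl)
    · exact ⟨T.par_mem y hy, .inr ⟨rfl, fun h => hpar.ne (congrArg T.level h.symm)⟩⟩
    · exact ⟨hc.1, .inl hc.2⟩
    · exact ⟨hd.1, .inl hd.2⟩
  have hcard : #({T.par y, c, d} : Set X) = 3 := by
    rw [mk_insert (by simp [hparc, hpard]), mk_insert (by simpa using hcd), mk_singleton]
    norm_num
  exact hcard ▸ mk_le_mk_of_subset hsub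

theorem isPerfect_iff_three_le_mk_nbhd :
    T.IsPerfect ↔ ∀ x ∈ T.verts, ∃ y ∈ T.verts, T.anc x y ∧ 3 ≤ #(T.nbhd y) := by
  refine ⟨fun hT x hx => ?_, fun h x hx =>
    (h x hx).imp fun y ⟨hy, hxy, hy3⟩ => ⟨hy, hxy, nontrivial_children hy3⟩⟩
  obtain ⟨c, hc⟩ := hT.isPruned x hx
  obtain ⟨y, hy, hcy, hchild⟩ := hT c hc.1
  refine ⟨y, hy, (anc_of_mem_children hc).trans hcy, three_le_mk_nbhd hy ?_ hchild⟩
  have := hcy.level_le hy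
  rw [level_of_mem_children hc] at this
  omega

end RTree

/-! ### Partwise stabilisers -/

theorem exists_involutive_of_symmetric_of_functional {α : Type*} {R : α → α → Prop}
    (hsymm : ∀ ⦃p q⦄, R p q → R q p) (hfun : ∀ ⦃p q q'⦄, R p q → R p q' → q = q') :
    ∃ σ : α → α, σ.Involutive ∧ (∀ p q, R p q → σ p = q) ∧ ∀ p, σ p = p ∨ R p (σ p) := by
  classical
  let σ : α → α := fun p => if h : ∃ q, R p q then h.choose else p
  have hσ : ∀ p q, R p q → σ p = q := fun p q h => by
    have hp : ∃ q, R p q := ⟨q, h⟩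
    exact (dif_pos hp).trans (hfun hp.choose_spec h)
  have hfix : ∀ p, σ p = p ∨ R p (σ p) := fun p => by
    by_cases hp : ∃ q, R p q
    · obtain ⟨q, hq⟩ := hp
      exact .inr ((hσ p q hq).symm ▸ hq)
    · exact .inl (dif_neg hp)
  refine ⟨σ, fun p => ?_, hσ, hfix⟩
  rcases hfix p with h | h
  · rw [h, h]
  · exact hσ _ _ (hsymm h)

theorem Chart.exists_involutive_extension {X : Type u} (f : Chart X) :
    ∃ σ : X × Bool → X × Bool, σ.Involutive ∧
      (∀ x y, (x, y) ∈ f.rel ↔ σ (x, false) = (y, true)) ∧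
      ∀ p, σ p = p ∨ (p.1, (σ p).1) ∈ f.rel ∨ ((σ p).1, p.1) ∈ f.rel := by
  let R : X × Bool → X × Bool → Prop
    | (x, false), (y, true) => (x, y) ∈ f.rel
    | (y, true), (x, false) => (x, y) ∈ f.rel
    | _, _ => False
  have hsymm : ∀ ⦃p q⦄, R p q → R q p := by
    rintro ⟨x, _ | _⟩ ⟨y, _ | _⟩ h <;> exact h
  have hfun : ∀ ⦃p q q'⦄, R p q → R p q' → q = q' := by
    rintro ⟨x, _ | _⟩ ⟨y, _ | _⟩ ⟨z, _ | _⟩ h h'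
    all_goals first | exact False.elim h | exact False.elim h' | skip
    · exact Prod.ext (f.functional h h') rfl
    · exact Prod.ext (f.injective h h') rfl
  obtain ⟨σ, hinv, hσ, hfix⟩ := exists_involutive_of_symmetric_of_functional hsymm hfun
  have hrel : ∀ p q, R p q → (p.1, q.1) ∈ f.rel ∨ (q.1, p.1) ∈ f.rel := by
    rintro ⟨x, _ | _⟩ ⟨y, _ | _⟩ h
    exacts [h.elim, .inl h, .inr h, h.elim]
  refine ⟨σ, hinv, fun x y => ⟨hσ (x, false) (y, true), fun h => ?_⟩,
    fun p => (hfix p).imp_right (hrel p (σ p))⟩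
  rcases hfix (x, false) with h' | h' <;> rw [h] at h'
  · simp at h'
  · exact h'

section Partition

variable {X : Type u} {Y : Type*} {P : Set (Set X)}

theorem ofInjective_mem_pStab (σ : Equiv.Perm X) (h : ∀ B ∈ P, ∀ x, σ x ∈ B ↔ x ∈ B) :
    Chart.ofInjective σ σ.injective ∈ PStab P := by
  refine ⟨⟨fun x => ⟨σ x, rfl⟩, fun y => ⟨σ.symm y, (σ.apply_symm_apply y).symm⟩⟩, fun B hB => ?_⟩
  ext y
  constructor
  · rintro ⟨x, hx, hxy⟩
    rw [Chart.mem_ofInjective.mp hxy]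
    exact (h B hB x).mpr hx
  · intro hy
    refine ⟨σ.symm y, (h B hB _).mp ?_, (σ.apply_symm_apply y).symm⟩
    rwa [σ.apply_symm_apply]

theorem exists_injective_parts (hunb : ∀ n : ℕ, ∃ B ∈ P, n ≤ B.ncard) (m : ℕ → ℕ) :
    ∃ J : ℕ → Set X, J.Injective ∧ ∀ i, J i ∈ P ∧ m i ≤ (J i).ncard := by
  choose B hB hcard using fun n => hunb (partialSups m n + n)
  obtain ⟨φ, hφ, hmono⟩ := Filter.strictMono_subseq_of_id_le (u := fun n => (B n).ncard)
    fun n => (Nat.le_add_left n _).trans (hcard n)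
  refine ⟨B ∘ φ, fun i j hij => hmono.injective (congrArg Set.ncard hij), fun i => ⟨hB _, ?_⟩⟩
  calc m i ≤ partialSups m i := le_partialSups m i
    _ ≤ partialSups m (φ i) := (partialSups m).monotone (hφ.id_le i)
    _ ≤ (B (φ i)).ncard := (Nat.le_add_right _ _).trans (hcard (φ i))

theorem exists_injective_mem_parts (hpart : Setoid.IsPartition P) (hfin : ∀ B ∈ P, B.Finite)
    (hunb : ∀ n : ℕ, ∃ B ∈ P, n ≤ B.ncard) {π : Y → ℕ} (hπ : ∀ n, {y | π y = n}.Finite) :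
    ∃ (J : ℕ → Set X) (θ : Y → X), (∀ i, J i ∈ P) ∧ θ.Injective ∧ ∀ y, θ y ∈ J (π y) := by
  obtain ⟨J, hJinj, hJ⟩ := exists_injective_parts hunb fun n => {y | π y = n}.ncard
  have : Nonempty X := by
    obtain ⟨B, -, hB⟩ := hunb 1
    exact (nonempty_of_ncard_ne_zero (Nat.one_le_iff_ne_zero.mp hB)).to_type
  have hθ : ∀ n, ∃ θ : Y → X, MapsTo θ {y | π y = n} (J n) ∧ InjOn θ {y | π y = n} := fun n => by
    refine (hπ n).exists_injOn_of_encard_le ?_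
    rw [← (hπ n).cast_ncard_eq, ← (hfin _ (hJ n).1).cast_ncard_eq]
    exact_mod_cast (hJ n).2
  choose θ hmaps hinj using hθ
  refine ⟨J, fun y => θ (π y) y, fun i => (hJ i).1, fun y z hyz => ?_, fun y => hmaps _ rfl⟩
  have hyz : θ (π y) y = θ (π z) z := hyz
  have hrank : π y = π z := hJinj (hpart.pairwiseDisjoint.elim_set (hJ _).1 (hJ _).1 (θ (π y) y)
    (hmaps _ rfl) (hyz ▸ hmaps _ rfl))
  rw [hrank] at hyz
  exact hinj (π z) hrank rfl hyz

theorem fiberwise_bsleq_pStab (hpart : Setoid.IsPartition P) (hfin : ∀ B ∈ P, B.Finite)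
    (hunb : ∀ n : ℕ, ∃ B ∈ P, n ≤ B.ncard) {κ : X → ℕ} (hκ : ∀ n, {x | κ x = n}.Finite) :
    BSleq (Chart.fiberwise κ) (PStab P) := by
  have hκ' : ∀ n, {p : X × Bool | κ p.1 = n}.Finite := fun n =>
    ((hκ n).prod finite_univ).subset fun p hp => ⟨hp, mem_univ _⟩
  obtain ⟨J, θ, hJ, hθ, hmem⟩ := exists_injective_mem_parts hpart hfin hunb hκ'
  refine .of_injective (f := fun x => θ (x, false)) (g := fun y => θ (y, true))
    (hθ.comp (Prod.mk_left_injective _)) (hθ.comp (Prod.mk_left_injective _)) fun f hf => ?_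
  obtain ⟨σ, hσ, hgraph, hpair⟩ := f.exists_involutive_extension
  have hrank : ∀ p, κ (σ p).1 = κ p.1 := fun p => by
    rcases hpair p with h | h | h
    · rw [h]
    · exact (hf _ _ h).symm
    · exact hf _ _ h
  let τ : Equiv.Perm X := hσ.toPerm.viaEmbedding ⟨θ, hθ⟩
  have hτ : ∀ p, τ (θ p) = θ (σ p) := hσ.toPerm.viaEmbedding_apply ⟨θ, hθ⟩
  refine ⟨_, ofInjective_mem_pStab τ fun B hB x => ?_, fun x y => ?_⟩
  · by_cases hx : x ∈ range θ
    · obtain ⟨p, rfl⟩ := hx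
      have hpart_iff : ∀ q, θ q ∈ B ↔ J (κ q.1) = B := fun q =>
        ⟨fun hq => hpart.pairwiseDisjoint.elim_set (hJ _) hB (θ q) (hmem q) hq, fun h => h ▸ hmem q⟩
      rw [hτ, hpart_iff, hpart_iff, hrank]
    · rw [hσ.toPerm.viaEmbedding_apply_of_notMem ⟨θ, hθ⟩ x hx]
  · rw [hgraph, Chart.mem_ofInjective, hτ, hθ.eq_iff, eq_comm]

theorem exists_rank_of_isPartition [Countable X] (hpart : Setoid.IsPartition P) :
    ∃ κ : X → ℕ, ∀ B ∈ P, ∀ x ∈ B, ∀ y, κ y = κ x ↔ y ∈ B := by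
  choose C hC using fun x => (hpart.2 x).exists
  obtain ⟨ν, hν⟩ := countable_iff_exists_injOn.mp (countable_range C)
  have hCB : ∀ B ∈ P, ∀ x, C x = B ↔ x ∈ B := fun B hB x =>
    ⟨fun h => h ▸ (hC x).2, hpart.pairwiseDisjoint.elim_set (hC x).1 hB x (hC x).2⟩
  refine ⟨ν ∘ C, fun B hB x hx y => ?_⟩
  rw [Function.comp_apply, Function.comp_apply, hν.eq_iff (mem_range_self y) (mem_range_self x),
    (hCB B hB x).mpr hx, hCB B hB]

theorem RTree.IsPerfect.pStab_bsleq [Countable X] {T : RTree X} (hT : T.IsPerfect)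
    (hpart : Setoid.IsPartition P) (hfin : ∀ B ∈ P, B.Finite) : BSleq (PStab P) (pathSg T) := by
  obtain ⟨κ, hκ⟩ := exists_rank_of_isPartition hpart
  have hfibre : ∀ n, {x | κ x = n}.Finite := fun n => by
    rcases {x | κ x = n}.eq_empty_or_nonempty with h | ⟨x, rfl⟩
    · exact h ▸ finite_empty
    · obtain ⟨B, ⟨hB, hx⟩, -⟩ := hpart.2 x
      exact (hfin B hB).subset fun y hy => (hκ B hB x hx y).mp hy
  refine (BSleq.of_subset fun f hf x y hxy => ?_).trans (hT.fiberwise_bsleq hfibre)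
  obtain ⟨B, ⟨hB, hx⟩, -⟩ := hpart.2 x
  have hy : y ∈ {y | ∃ x ∈ B, (x, y) ∈ f.rel} := ⟨x, hx, hxy⟩
  rw [hf.2 B hB] at hy
  exact ((hκ B hB x hx y).mpr hy).symm

end Partition

/-! ### Countable covers of the rooted paths -/

namespace IsSubtree

variable {X : Type u} {S T : RTree X} {x y : X}

theorem iterate_par_eq (h : IsSubtree S T) (hx : x ∈ S.verts) (n : ℕ) :
    S.par^[n] x = T.par^[n] x := by
  induction n with
  | zero => rfl
  | succ n ih =>
    rw [Function.iterate_succ_apply', Function.iterate_succ_apply', ← ih,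
      h.2.2 _ (RTree.iterate_par_mem hx n)]

theorem anc_iff (h : IsSubtree S T) (hy : y ∈ S.verts) : S.anc x y ↔ T.anc x y :=
  exists_congr fun n => by rw [h.iterate_par_eq hy]

theorem level_eq (h : IsSubtree S T) (hx : x ∈ S.verts) : S.level x = T.level x := by
  simp only [RTree.level, h.iterate_par_eq hx, h.2.1]

theorem isRootedPath_iff (h : IsSubtree S T) {P : Set X} :
    S.IsRootedPath P ↔ T.IsRootedPath P ∧ P ⊆ S.verts := by
  constructor
  · rintro ⟨hne, hP, hpar, hlin⟩
    exact ⟨⟨hne, hP.trans h.1, fun x hx => h.2.2 x (hP hx) ▸ hpar x hx, fun x hx y hy =>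
      (hlin x hx y hy).imp (h.anc_iff (hP hy)).mp (h.anc_iff (hP hx)).mp⟩, hP⟩
  · rintro ⟨⟨hne, -, hpar, hlin⟩, hP⟩
    exact ⟨hne, hP, fun x hx => (h.2.2 x (hP hx)).symm ▸ hpar x hx, fun x hx y hy =>
      (hlin x hx y hy).imp (h.anc_iff (hP hy)).mpr (h.anc_iff (hP hx)).mpr⟩

theorem pathSg_subset (h : IsSubtree S T) : pathSg S ⊆ pathSg T := by
  rintro f ⟨⟨_, hdom, rfl⟩, ⟨_, hran, rfl⟩, hlevel⟩
  refine ⟨⟨_, (h.isRootedPath_iff.mp hdom).1, rfl⟩, ⟨_, (h.isRootedPath_iff.mp hran).1, rfl⟩,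
    fun x y hxy => ?_⟩
  rw [← h.level_eq (hdom.2.1 ⟨y, hxy⟩), ← h.level_eq (hran.2.1 ⟨x, hxy⟩)]
  exact hlevel x y hxy

end IsSubtree

namespace RTree

variable {X : Type u} {T : RTree X} {x : X} {n : ℕ}

/-- The subtree of `T` on a parent-closed set of vertices containing the root. -/
def restrict (T : RTree X) (V : Set X) (hV : V ⊆ T.verts) (hroot : T.root ∈ V)
    (hpar : ∀ x ∈ V, T.par x ∈ V) : RTree X where
  verts := V
  root := T.root
  root_mem := hroot
  par := T.par
  par_mem := hpar
  par_root := T.par_root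
  par_reaches := fun x hx => T.par_reaches x (hV hx)

theorem isSubtree_restrict {V : Set X} (hV : V ⊆ T.verts) (hroot : T.root ∈ V)
    (hpar : ∀ x ∈ V, T.par x ∈ V) : IsSubtree (T.restrict V hV hroot hpar) T :=
  ⟨hV, rfl, fun _ _ => rfl⟩

/-- The vertices comparable with `x`, that is, those on some rooted path through `x`. -/
def cone (T : RTree X) (x : X) : Set X := {y ∈ T.verts | T.anc x y ∨ T.anc y x}

theorem IsRootedPath.subset_cone {P : Set X} (hP : T.IsRootedPath P) (hx : x ∈ P) :
    P ⊆ T.cone x := fun y hy => ⟨hP.2.1 hy, hP.2.2.2 x hx y hy⟩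

theorem cone_level_subset_singleton (hx : x ∈ T.verts) (hn : n ≤ T.level x) :
    {y ∈ T.cone x | T.level y = n} ⊆ {T.ancAt x n} := by
  rintro y ⟨⟨hy, hxy | hyx⟩, rfl⟩
  · obtain rfl := hxy.eq_of_level_eq hy ((hxy.level_le hy).antisymm hn)
    exact ((anc_refl x).ancAt_level hx).symm
  · exact (hyx.ancAt_level hx).symm

theorem exists_mem_children_of_mem_cone (hx : x ∈ T.verts) (hn : T.level x ≤ n) {y : X}
    (hy : y ∈ T.cone x) (hl : T.level y = n + 1) :
    ∃ z ∈ {z ∈ T.cone x | T.level z = n}, T.anc x z ∧ y ∈ T.children z := by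
  obtain ⟨hy, hcomp⟩ := hy
  have hxy : T.anc x y := hcomp.resolve_right fun hyx => by
    have := hyx.level_le hx
    omega
  have hlpar : T.level (T.par y) = n := by rw [level_par hy, hl, Nat.add_sub_cancel]
  have hxpar : T.anc x (T.par y) := hxy.of_le (anc_par y) hy (hlpar.symm ▸ hn)
  exact ⟨T.par y, ⟨⟨T.par_mem y hy, .inl hxpar⟩, hlpar⟩, hxpar, mem_children_par hy (by omega)⟩

theorem finite_cone_level (hx : x ∈ T.verts)
    (h : ∀ y ∈ T.verts, T.anc x y → (T.children y).Finite) (n : ℕ) :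
    {y ∈ T.cone x | T.level y = n}.Finite := by
  rcases le_total n (T.level x) with hn | hn
  · exact (finite_singleton _).subset (cone_level_subset_singleton hx hn)
  · induction n, hn using Nat.le_induction with
    | base => exact (finite_singleton _).subset (cone_level_subset_singleton hx le_rfl)
    | succ n hn ih =>
      refine ((ih.inter_of_left {z | T.anc x z}).biUnion
        fun z hz => h z hz.1.1.1 hz.2).subset fun y ⟨hy, hl⟩ => ?_
      obtain ⟨z, hz, hxz, hyz⟩ := exists_mem_children_of_mem_cone hx hn hy hl
      exact mem_biUnion (x := z) ⟨hz, hxz⟩ hyz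

theorem subsingleton_cone_level (hx : x ∈ T.verts)
    (h : ∀ y ∈ T.verts, T.anc x y → (T.children y).Subsingleton) (n : ℕ) :
    {y ∈ T.cone x | T.level y = n}.Subsingleton := by
  rcases le_total n (T.level x) with hn | hn
  · exact subsingleton_singleton.anti (cone_level_subset_singleton hx hn)
  · induction n, hn using Nat.le_induction with
    | base => exact subsingleton_singleton.anti (cone_level_subset_singleton hx le_rfl)
    | succ n hn ih =>
      rintro y ⟨hy, hl⟩ y' ⟨hy', hl'⟩
      obtain ⟨z, hz, hxz, hyz⟩ := exists_mem_children_of_mem_cone hx hn hy hl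
      obtain ⟨z', hz', -, hyz'⟩ := exists_mem_children_of_mem_cone hx hn hy' hl'
      obtain rfl := ih hz hz'
      exact h z hz.1.1 hxz hyz hyz'

/-- `F` covers the rooted paths of `T` through `x`: each of them lies in a member of `F`. -/
def CoversPathsThrough (T : RTree X) (F : Set (Set X)) (x : X) : Prop :=
  ∀ P, T.IsRootedPath P → x ∈ P → ∃ G ∈ F, P ⊆ G

/-- A Cantor–Bendixson argument: remove every vertex whose rooted paths have a countable cover. -/
theorem exists_coversPathsThrough_or_exists_isSubtree [Countable X] (T : RTree X)
    (𝒢 : Set (Set X)) :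
    (∃ F ⊆ 𝒢, F.Countable ∧ T.CoversPathsThrough F T.root) ∨
      ∃ S, IsSubtree S T ∧ ∀ x ∈ S.verts, S.cone x ∉ 𝒢 := by
  refine or_iff_not_imp_left.mpr fun hroot => ?_
  let V := {x ∈ T.verts | ¬ ∃ F ⊆ 𝒢, F.Countable ∧ T.CoversPathsThrough F x}
  have hpar : ∀ x ∈ V, T.par x ∈ V := fun x ⟨hx, hcov⟩ =>
    ⟨T.par_mem x hx, fun ⟨F, hF, hcount, hcovF⟩ =>
      hcov ⟨F, hF, hcount, fun P hP hxP => hcovF P hP (hP.2.2.1 x hxP)⟩⟩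
  have hsub := isSubtree_restrict (fun _ hx => hx.1) (⟨T.root_mem, hroot⟩ : T.root ∈ V) hpar
  refine ⟨_, hsub, fun x hx hcone => hx.2 ?_⟩
  have hremoved : ∀ z : ↥(T.verts \ V), ∃ F ⊆ 𝒢, F.Countable ∧ T.CoversPathsThrough F z :=
    fun ⟨z, hz, hzV⟩ => not_not.mp fun h => hzV ⟨hz, h⟩
  choose F hF hcount hcov using hremoved
  refine ⟨_, insert_subset hcone (iUnion_subset hF), (countable_iUnion hcount).insert _,
    fun P hP hxP => ?_⟩
  by_cases hPV : P ⊆ V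
  · exact ⟨_, mem_insert _ _, (hsub.isRootedPath_iff.mpr ⟨hP, hPV⟩).subset_cone hxP⟩
  · obtain ⟨z, hzP, hzV⟩ := not_subset.mp hPV
    obtain ⟨G, hG, hPG⟩ := hcov ⟨z, hP.2.1 hzP, hzV⟩ P hP hzP
    exact ⟨G, .inr (mem_iUnion_of_mem _ hG), hPG⟩

end RTree

theorem exists_rank_of_finite_inter_fibers {X : Type u} [Countable X] {l : X → ℕ} {G : Set X}
    (hG : ∀ n, {x ∈ G | l x = n}.Finite) :
    ∃ κ : X → ℕ, (∀ n, {x | κ x = n}.Finite) ∧ ∀ x ∈ G, ∀ y ∈ G, l x = l y → κ x = κ y := by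
  classical
  obtain ⟨ν, hν⟩ := Countable.exists_injective_nat X
  refine ⟨fun x => if x ∈ G then 2 * l x else 2 * ν x + 1, fun n => ?_, fun x hx y hy hl => ?_⟩
  · refine ((hG (n / 2)).union (Finite.preimage hν.injOn (finite_singleton (n / 2)))).subset ?_
    intro x hx
    simp only [Set.mem_ofPred_eq] at hx
    split_ifs at hx with hxG
    · exact .inl ⟨hxG, by omega⟩
    · exact .inr (show ν x = n / 2 by omega)
  · simp only [if_pos hx, if_pos hy, hl]

namespace RTree

variable {X : Type u} {T : RTree X}

theorem children_subset_nbhd (x : X) : T.children x ⊆ T.nbhd x := fun _ hy => ⟨hy.1, .inl hy.2⟩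

theorem exists_cover_of_forall_not_infinite_nbhd [Countable X]
    (h : ¬ ∃ S : RTree X, IsSubtree S T ∧
      ∀ x ∈ S.verts, ∃ y ∈ S.verts, S.anc x y ∧ (S.nbhd y).Infinite) :
    ∃ F ⊆ {G : Set X | ∀ n, {y ∈ G | T.level y = n}.Finite}, F.Countable ∧
      T.CoversPathsThrough F T.root := by
  refine (T.exists_coversPathsThrough_or_exists_isSubtree _).resolve_right ?_
  rintro ⟨S, hS, hcone⟩
  refine h ⟨S, hS, fun x hx => ?_⟩
  by_contra! hfin
  refine hcone x hx fun n => (finite_cone_level hx (fun y hy hxy =>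
    (hfin y hy hxy).subset (children_subset_nbhd y)) n).subset ?_
  exact fun y ⟨hy, hl⟩ => ⟨hy, (hS.level_eq hy.1).trans hl⟩

theorem pathSg_bsleq_pStab [Countable X] {P : Set (Set X)} (hpart : Setoid.IsPartition P)
    (hfin : ∀ B ∈ P, B.Finite) (hunb : ∀ n : ℕ, ∃ B ∈ P, n ≤ B.ncard)
    (h : ¬ ∃ S : RTree X, IsSubtree S T ∧
      ∀ x ∈ S.verts, ∃ y ∈ S.verts, S.anc x y ∧ (S.nbhd y).Infinite) :
    BSleq (pathSg T) (PStab P) := by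
  obtain ⟨F, hF, hcount, hcov⟩ := exists_cover_of_forall_not_infinite_nbhd h
  have := hcount.to_subtype
  have hcover : pathSg T ⊆ ⋃ i : F × F, {f : Chart X | f.dom ⊆ i.1.1 ∧ f.ran ⊆ i.2.1 ∧
      ∀ x y : X, (x, y) ∈ f.rel → T.level y = T.level x} := by
    rintro f ⟨⟨_, hdom, rfl⟩, ⟨_, hran, rfl⟩, hlevel⟩
    obtain ⟨G, hG, hdomG⟩ := hcov _ hdom hdom.root_mem
    obtain ⟨H, hH, hranH⟩ := hcov _ hran hran.root_mem
    exact mem_iUnion.mpr ⟨(⟨G, hG⟩, ⟨H, hH⟩), hdomG, hranH, hlevel⟩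
  refine (BSleq.of_subset hcover).trans (.iUnion fun ⟨⟨G, hG⟩, ⟨H, hH⟩⟩ => ?_)
  have hGH : ∀ n, {x ∈ G ∪ H | T.level x = n}.Finite := fun n =>
    ((hF hG n).union (hF hH n)).subset fun x ⟨hx, hl⟩ => hx.imp (⟨·, hl⟩) (⟨·, hl⟩)
  obtain ⟨κ, hκ, hrank⟩ := exists_rank_of_finite_inter_fibers hGH
  refine (BSleq.of_subset ?_).trans (fiberwise_bsleq_pStab hpart hfin hunb hκ)
  exact fun f ⟨hdom, hran, hlevel⟩ x y hxy =>
    hrank x (.inl (hdom ⟨y, hxy⟩)) y (.inr (hran ⟨x, hxy⟩)) (hlevel x y hxy).symm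

theorem IsRootedPath.eq_of_subset_of_injOn_level {P G : Set X} (hP : T.IsRootedPath P)
    (hinf : P.Infinite) (hPG : P ⊆ G) (hG : InjOn T.level G) : P = G := by
  refine hPG.antisymm fun y hy => ?_
  obtain ⟨_, ⟨p, hp, rfl⟩, hlt⟩ := (hinf.image (hG.mono hPG)).exists_gt (T.level y)
  have hanc : T.ancAt p (T.level y) ∈ P := hP.mem_of_anc (anc_ancAt p _) hp
  rwa [← hG (hPG hanc) hy (level_ancAt (hP.2.1 hp) hlt.le)]

theorem countable_isRootedPath [Countable X]
    (h : ¬ ∃ S : RTree X, IsSubtree S T ∧ S.IsPerfect) : {P | T.IsRootedPath P}.Countable := by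
  obtain ⟨F, hF, hcount, hcov⟩ :=
    (T.exists_coversPathsThrough_or_exists_isSubtree {G | InjOn T.level G}).resolve_right (by
      rintro ⟨S, hS, hcone⟩
      refine h ⟨S, hS, fun x hx => ?_⟩
      by_contra! hchild
      refine hcone x hx fun y hy z hz hl => ?_
      rw [← hS.level_eq hy.1, ← hS.level_eq hz.1] at hl
      exact subsingleton_cone_level hx hchild _ ⟨hy, hl⟩ ⟨hz, rfl⟩)
  refine ((countable_ofPred_finite_subset (to_countable (univ : Set X))).union hcount).mono ?_
  intro P hP
  obtain ⟨G, hG, hPG⟩ := hcov P hP hP.root_mem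
  rcases P.finite_or_infinite with hfin | hinf
  · exact .inl ⟨hfin, subset_univ P⟩
  · exact .inr (hP.eq_of_subset_of_injOn_level hinf hPG (hF hG) ▸ hG)

theorem injOn_dom_ran_pathSg (T : RTree X) :
    InjOn (fun f : Chart X => (f.dom, f.ran)) (pathSg T) := by
  have hle : ∀ f ∈ pathSg T, ∀ g ∈ pathSg T, f.dom = g.dom → f.ran = g.ran →
      ∀ x y, (x, y) ∈ f.rel → (x, y) ∈ g.rel := by
    rintro f ⟨-, -, hf⟩ g ⟨-, ⟨_, hran, rfl⟩, hg⟩ hdom_eq hran_eq x y hxy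
    obtain ⟨z, hxz⟩ : x ∈ g.dom := hdom_eq ▸ ⟨y, hxy⟩
    have hy : y ∈ g.ran := hran_eq ▸ ⟨x, hxy⟩
    rwa [hran.injOn_level hy ⟨x, hxz⟩ ((hf x y hxy).trans (hg x z hxz).symm)]
  intro f hf g hg hfg
  obtain ⟨hdom, hran⟩ := Prod.mk.injEq .. ▸ hfg
  exact Chart.ext fun x y =>
    ⟨hle f hf g hg hdom hran x y, hle g hg f hf hdom.symm hran.symm x y⟩

theorem countable_pathSg (h : {P | T.IsRootedPath P}.Countable) : (pathSg T).Countable := by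
  refine MapsTo.countable_of_injOn (t := {P | T.IsRootedPath P} ×ˢ {P | T.IsRootedPath P}) ?_
    T.injOn_dom_ran_pathSg (h.prod h)
  rintro f ⟨⟨_, hdom, rfl⟩, ⟨_, hran, rfl⟩, -⟩
  exact ⟨hdom, hran⟩

end RTree

theorem stmt16_general {X : Type u} [Countable X] (T : RTree X) (Pω : Set (Set X))
    (hpart : Setoid.IsPartition Pω) (hfin : ∀ B ∈ Pω, B.Finite)
    (hunb : ∀ n : ℕ, ∃ B ∈ Pω, n ≤ B.ncard) :
    ((∃ T' : RTree X, IsSubtree T' T ∧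
        ∀ x ∈ T'.verts, ∃ y ∈ T'.verts, T'.anc x y ∧ (T'.nbhd y).Infinite) ∧
      BSequiv (pathSg T) (Set.univ : Set (Chart X))) ∨
    ((¬ ∃ T' : RTree X, IsSubtree T' T ∧
        ∀ x ∈ T'.verts, ∃ y ∈ T'.verts, T'.anc x y ∧ (T'.nbhd y).Infinite) ∧
      (∃ T' : RTree X, IsSubtree T' T ∧
        ∀ x ∈ T'.verts, ∃ y ∈ T'.verts, T'.anc x y ∧ 3 ≤ #↥(T'.nbhd y)) ∧
      BSequiv (pathSg T) (PStab Pω)) ∨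
    ({P : Set X | T.IsRootedPath P}.Countable ∧
      BSequiv (pathSg T) (∅ : Set (Chart X))) := by
  simp only [← RTree.isPerfect_iff_three_le_mk_nbhd]
  by_cases hinf : ∃ T' : RTree X, IsSubtree T' T ∧
      ∀ x ∈ T'.verts, ∃ y ∈ T'.verts, T'.anc x y ∧ (T'.nbhd y).Infinite
  · obtain ⟨T', hsub, hT'⟩ := hinf
    exact .inl ⟨⟨T', hsub, hT'⟩, .of_subset (subset_univ _),
      (RTree.bsleq_univ_pathSg hT').trans (.of_subset hsub.pathSg_subset)⟩
  by_cases hperf : ∃ T' : RTree X, IsSubtree T' T ∧ T'.IsPerfect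
  · obtain ⟨T', hsub, hT'⟩ := hperf
    exact .inr (.inl ⟨hinf, ⟨T', hsub, hT'⟩, RTree.pathSg_bsleq_pStab hpart hfin hunb hinf,
      (hT'.pStab_bsleq hpart hfin).trans (.of_subset hsub.pathSg_subset)⟩)
  · have hcount := RTree.countable_isRootedPath hperf
    exact .inr (.inr ⟨hcount, .of_countable (RTree.countable_pathSg hcount),
      .of_subset (empty_subset _)⟩)

/-- trichotomy for rooted trees: for any rooted tree `T` on a
countably infinite vertex set `X`, either (i) `T` contains a subtree in which
every vertex has a descendant of infinite degree and `𝒮(T) ≈ I_X`; or (ii) `T`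
contains no such subtree but contains a subtree in which every vertex has a
descendant of degree at least 3, and `𝒮(T) ≈ PStab 𝒫_ω`; or (iii) the set of
rooted paths of `T` is countable and `𝒮(T) ≈ ∅`. -/
theorem stmt16 {X : Type u} [Countable X] [Infinite X] (T : RTree X)
    (hT : T.verts = Set.univ)
    (Pω : Set (Set X)) (hpart : Setoid.IsPartition Pω)
    (hfin : ∀ B ∈ Pω, B.Finite) (hunb : ∀ n : ℕ, ∃ B ∈ Pω, n ≤ B.ncard) :
    ((∃ T' : RTree X, IsSubtree T' T ∧
        ∀ x ∈ T'.verts, ∃ y ∈ T'.verts, T'.anc x y ∧ (T'.nbhd y).Infinite) ∧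
      BSequiv (pathSg T) (Set.univ : Set (Chart X))) ∨
    ((¬ ∃ T' : RTree X, IsSubtree T' T ∧
        ∀ x ∈ T'.verts, ∃ y ∈ T'.verts, T'.anc x y ∧ (T'.nbhd y).Infinite) ∧
      (∃ T' : RTree X, IsSubtree T' T ∧
        ∀ x ∈ T'.verts, ∃ y ∈ T'.verts, T'.anc x y ∧ 3 ≤ #↥(T'.nbhd y)) ∧
      BSequiv (pathSg T) (PStab Pω)) ∨
    ({P : Set X | T.IsRootedPath P}.Countable ∧
      BSequiv (pathSg T) (∅ : Set (Chart X))) :=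
  stmt16_general T Pω hpart hfin hunb
end

section
/- Let X be a countably infinite set and E_X the semilattice of idempotents of I_X (the set of partial identity charts). Then ∅ ≺ E_X ≺ PStab(𝒫_2); that is, E_X ⋠ ∅, E_X ≼ PStab(𝒫_2), and PStab(𝒫_2) ⋠ E_X. -/
open Set Cardinal

universe u

/-! `E_X` is uncountable, whereas countably many charts generate only countably many charts; hence
`E_X ⋠ ∅`.

The fixed-point-free involution `s` that swaps the two points of every part has a transversal of
cardinality `|X|`, so there is an injection `φ : X → X` whose image is disjoint from its image
under `s`. If `π` agrees with `s` on the parts meeting `φ(X ∖ A)` and fixes every other point, then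
`π` lies in the stabiliser and `φ π φ⁻¹` (composed from left to right) is the partial identity on
`A`. Hence `φ` and `φ⁻¹` suffice as additional generators for `E_X ≼ PStab(𝒫₂)`.

Replacing every factor from `E_X` by the identity extends a product of charts, and a permutation
has no proper extension. Hence `PStab(𝒫₂) ≼ E_X` would make `PStab(𝒫₂)` countable, and then `E_X`
too. -/

open Function

namespace Chart

variable {X : Type u} {f g : Chart X} {x y : X}

theorem rel_injective : Injective (rel : Chart X → Set (X × X)) := by
  rintro ⟨⟩ ⟨⟩ rfl
  rfl

theorem mem_rel_mul : (x, y) ∈ (f * g).rel ↔ ∃ z, (x, z) ∈ f.rel ∧ (z, y) ∈ g.rel := Iff.rfl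

theorem mem_rel_inv : (x, y) ∈ f⁻¹.rel ↔ (y, x) ∈ f.rel := Iff.rfl

instance : Semigroup (Chart X) where
  mul_assoc f g h := rel_injective <| by
    ext ⟨x, y⟩
    simp only [mem_rel_mul]
    tauto

theorem rel_mul_subset_rel_mul {f' g' : Chart X} (hf : f.rel ⊆ f'.rel) (hg : g.rel ⊆ g'.rel) :
    (f * g).rel ⊆ (f' * g').rel :=
  fun _ ⟨z, hxz, hzy⟩ ↦ ⟨z, hf hxz, hg hzy⟩

theorem eq_of_rel_subset_of_dom_eq_univ (hf : f.dom = Set.univ) (hfg : f.rel ⊆ g.rel) : f = g := by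
  refine rel_injective (hfg.antisymm ?_)
  rintro ⟨x, y⟩ hxy
  obtain ⟨z, hxz⟩ : x ∈ f.dom := hf ▸ mem_univ x
  rwa [g.functional hxy (hfg hxz)]

/-- The partial identity chart `id_A` on a subset `A` of `X`. -/
def idOn (A : Set X) : Chart X where
  rel := {p | p.1 ∈ A ∧ p.2 = p.1}
  functional _ _ _ h h' := h.2.trans h'.2.symm
  injective _ _ _ h h' := h.2.symm.trans h'.2

theorem mem_rel_idOn {A : Set X} : (x, y) ∈ (idOn A).rel ↔ x ∈ A ∧ y = x := Iff.rfl

theorem idOn_injective : Injective (idOn : Set X → Chart X) := by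
  intro A B hAB
  ext x
  simpa [mem_rel_idOn] using congrArg ((x, x) ∈ ·.rel) hAB

theorem range_idOn : range (idOn : Set X → Chart X) = EX X := by
  refine Subset.antisymm (range_subset_iff.2 fun A x y h ↦ h.2) fun f hf ↦ ?_
  refine ⟨f.dom, rel_injective <| Set.ext fun ⟨x, y⟩ ↦ ⟨?_, fun h ↦ ⟨⟨y, h⟩, hf x y h⟩⟩⟩
  rintro ⟨⟨z, hxz⟩, rfl : y = x⟩
  rwa [hf y z hxz] at hxz

/-- An injective self-map of `X`, regarded as a chart with full domain. -/
def ofEmbedding (φ : X ↪ X) : Chart X where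
  rel := {p | p.2 = φ p.1}
  functional _ _ _ h h' := h.trans h'.symm
  injective _ _ _ h h' := φ.injective (h.symm.trans h')

theorem mem_rel_ofEmbedding {φ : X ↪ X} : (x, y) ∈ (ofEmbedding φ).rel ↔ y = φ x := Iff.rfl

theorem mem_rel_ofEmbedding_mul_mul_inv {φ : X ↪ X} :
    (x, y) ∈ (ofEmbedding φ * f * (ofEmbedding φ)⁻¹).rel ↔ (φ x, φ y) ∈ f.rel := by
  simp [mem_rel_mul, mem_rel_inv, mem_rel_ofEmbedding]

theorem ofEmbedding_mem_PStab {P : Set (Set X)} {π : X → X} (hπ : Involutive π)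
    (hP : ∀ B ∈ P, MapsTo π B B) : ofEmbedding ⟨π, hπ.injective⟩ ∈ PStab P := by
  refine ⟨⟨fun x ↦ ⟨π x, rfl⟩, fun y ↦ ⟨π y, (hπ y).symm⟩⟩, fun B hB ↦ Subset.antisymm ?_ ?_⟩
  · rintro y ⟨x, hx, hxy⟩
    rw [mem_rel_ofEmbedding.1 hxy]
    exact hP B hB hx
  · exact fun y hy ↦ ⟨π y, hP B hB hy, (hπ y).symm⟩

end Chart

open Chart

section Countability

variable {X : Type u} {S T U : Set (Chart X)} {f : Chart X}

theorem InGen.exists_foldl_eq (hf : InGen S f) :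
    ∃ (g : S) (l : List S), (l.map (↑)).foldl (· * ·) (g : Chart X) = f := by
  induction hf with
  | @base f hf => exact ⟨⟨f, hf⟩, [], rfl⟩
  | mul _ _ ihf ihg =>
    obtain ⟨g₁, l₁, rfl⟩ := ihf
    obtain ⟨g₂, l₂, rfl⟩ := ihg
    exact ⟨g₁, l₁ ++ g₂ :: l₂, by simp [List.foldl_assoc]⟩

theorem countable_Sgen (hS : S.Countable) : (Sgen S).Countable := by
  have : Countable S := hS.to_subtype
  refine (countable_range fun w : S × List S ↦
    (w.2.map (↑)).foldl (· * ·) (w.1 : Chart X)).mono fun f hf ↦ ?_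
  obtain ⟨g, l, hgl⟩ := InGen.exists_foldl_eq hf
  exact ⟨(g, l), hgl⟩

theorem BSleq.countable (h : BSleq S T) (hT : T.Countable) : S.Countable :=
  let ⟨_, hU, hS⟩ := h
  (countable_Sgen (hT.union hU)).mono hS

theorem not_countable_EX [Infinite X] : ¬ (EX X).Countable := by
  rw [← range_idOn, ← le_aleph0_iff_set_countable, mk_range_eq _ idOn_injective, mk_set, not_le]
  exact (aleph0_le_mk X).trans_lt (cantor #X)

theorem InGen.exists_rel_subset_of_EX_union (hf : InGen (EX X ∪ U) f) :
    ∃ g ∈ Sgen (insert (idOn Set.univ) U), f.rel ⊆ g.rel := by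
  induction hf with
  | base hf =>
    rcases hf with hf | hf
    · exact ⟨_, .base (mem_insert _ _), fun ⟨x, y⟩ hxy ↦ ⟨mem_univ x, hf x y hxy⟩⟩
    · exact ⟨_, .base (mem_insert_of_mem _ hf), Subset.rfl⟩
  | mul _ _ ihf ihg =>
    obtain ⟨f', hf', hff'⟩ := ihf
    obtain ⟨g', hg', hgg'⟩ := ihg
    exact ⟨f' * g', .mul hf' hg', rel_mul_subset_rel_mul hff' hgg'⟩

theorem BSleq.countable_of_EX (h : BSleq S (EX X)) (hS : ∀ f ∈ S, f.dom = Set.univ) :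
    S.Countable := by
  obtain ⟨U, hU, hSU⟩ := h
  refine (countable_Sgen (hU.insert (idOn Set.univ))).mono fun f hf ↦ ?_
  obtain ⟨g, hg, hfg⟩ := InGen.exists_rel_subset_of_EX_union (hSU hf)
  rwa [eq_of_rel_subset_of_dom_eq_univ (hS f hf) hfg]

end Countability

section Involution

variable {X : Type u} {s : X → X}

theorem involutive_piecewise_id (hs : Involutive s) {C : Set X} [∀ x, Decidable (x ∈ C)]
    (hC : MapsTo s C C) : Involutive (C.piecewise s id) := by
  intro x
  by_cases hx : x ∈ C
  · rw [piecewise_eq_of_mem _ _ _ hx, piecewise_eq_of_mem _ _ _ (hC hx), hs x]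
  · simp [hx]

theorem exists_embedding_forall_ne [Infinite X] (hs : Involutive s) (hfix : ∀ x, s x ≠ x) :
    ∃ φ : X ↪ X, ∀ x y, φ x ≠ s (φ y) := by
  classical
  -- Any linear order selects a transversal: the smaller point of each pair `{x, s x}`.
  let : LinearOrder X := linearOrderOfSTO WellOrderingRel
  let T : Set X := {x | x < s x}
  have hsT : s '' T = Tᶜ := by
    ext x
    simp [T, hs.image_eq_preimage_symm, hs x, (hfix x).le_iff_lt]
  have hadd : #T + #T = #X := by
    rw [← mk_sum_compl T, ← hsT, mk_image_eq hs.injective]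
  have hT : ℵ₀ ≤ #T := by
    by_contra! hT
    exact (hadd ▸ add_lt_aleph0 hT hT).not_ge (aleph0_le_mk X)
  obtain ⟨e⟩ : Nonempty (X ≃ T) := Cardinal.eq.1 (hadd ▸ add_eq_self hT)
  refine ⟨e.toEmbedding.trans (Embedding.subtype _), fun x y hxy ↦ ?_⟩
  have : s (e y) ∈ Tᶜ := hsT ▸ mem_image_of_mem s (e y).2
  exact this (hxy ▸ (e x).2)

theorem EX_bsleq_PStab_of_involutive {P : Set (Set X)} (hs : Involutive s)
    (hP : ∀ B ∈ P, MapsTo s B B) (φ : X ↪ X) (hφ : ∀ x y, φ x ≠ s (φ y)) :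
    BSleq (EX X) (PStab P) := by
  classical
  refine ⟨{ofEmbedding φ, (ofEmbedding φ)⁻¹}, (toFinite _).countable, ?_⟩
  rw [← range_idOn]
  rintro _ ⟨A, rfl⟩
  let C : Set X := φ '' Aᶜ ∪ s ⁻¹' (φ '' Aᶜ)
  let π : X → X := C.piecewise s id
  have hC : MapsTo s C C := by
    rintro x (hx | hx)
    · exact .inr (by rwa [mem_preimage, hs x])
    · exact .inl hx
  have hφC (x : X) : φ x ∈ C ↔ x ∉ A := by
    simp [C, hφ]
  have hπ : Involutive π := involutive_piecewise_id hs hC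
  have hπP (B : Set X) (hB : B ∈ P) : MapsTo π B B := by
    intro x hx
    by_cases hxC : x ∈ C
    · simpa [π, hxC] using hP B hB hx
    · simpa [π, hxC] using hx
  have hidOn : idOn A = ofEmbedding φ * ofEmbedding ⟨π, hπ.injective⟩ * (ofEmbedding φ)⁻¹ := by
    refine rel_injective <| Set.ext fun ⟨x, y⟩ ↦ ?_
    rw [mem_rel_ofEmbedding_mul_mul_inv, mem_rel_idOn, mem_rel_ofEmbedding]
    by_cases hx : x ∈ A <;> simp [π, hφC, hx, hφ]
  rw [hidOn]
  exact .mul (.mul (.base (.inr (by simp))) (.base (.inl (ofEmbedding_mem_PStab hπ hπP))))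
    (.base (.inr (by simp)))

end Involution

section PairPartition

variable {X : Type u} {P2 : Set (Set X)}

theorem exists_eq_pair_of_isPartition (hpart : Setoid.IsPartition P2)
    (h2 : ∀ B ∈ P2, ∃ a b : X, a ≠ b ∧ B = {a, b}) (x : X) :
    ∃ y ≠ x, ∀ B ∈ P2, x ∈ B → B = {x, y} := by
  obtain ⟨B, ⟨hB, hxB⟩, huniq⟩ := hpart.2 x
  obtain ⟨a, b, hab, rfl⟩ := h2 B hB
  rcases hxB with rfl | rfl
  · exact ⟨b, hab.symm, fun B' hB' hx ↦ huniq B' ⟨hB', hx⟩⟩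
  · exact ⟨a, hab, fun B' hB' hx ↦ (huniq B' ⟨hB', hx⟩).trans (pair_comm a x)⟩

theorem exists_involutive_mapsTo_of_isPartition (hpart : Setoid.IsPartition P2)
    (h2 : ∀ B ∈ P2, ∃ a b : X, a ≠ b ∧ B = {a, b}) :
    ∃ s : X → X, Involutive s ∧ (∀ x, s x ≠ x) ∧ ∀ B ∈ P2, MapsTo s B B := by
  choose s hfix hpair using exists_eq_pair_of_isPartition hpart h2
  have hmaps (B : Set X) (hB : B ∈ P2) : MapsTo s B B := by
    intro x hx
    rw [hpair x B hB hx]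
    exact mem_insert_of_mem x rfl
  refine ⟨s, fun x ↦ ?_, hfix, hmaps⟩
  obtain ⟨B, ⟨hB, hxB⟩, -⟩ := hpart.2 x
  have hss : s (s x) ∈ ({x, s x} : Set X) :=
    hpair x B hB hxB ▸ hmaps B hB (hmaps B hB hxB)
  exact hss.resolve_right (hfix (s x))

theorem EX_bsleq_PStab [Infinite X] (hpart : Setoid.IsPartition P2)
    (h2 : ∀ B ∈ P2, ∃ a b : X, a ≠ b ∧ B = {a, b}) : BSleq (EX X) (PStab P2) := by
  obtain ⟨s, hs, hfix, hP2⟩ := exists_involutive_mapsTo_of_isPartition hpart h2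
  obtain ⟨φ, hφ⟩ := exists_embedding_forall_ne hs hfix
  exact EX_bsleq_PStab_of_involutive hs hP2 φ hφ

end PairPartition

theorem stmt18_general {X : Type u} [Infinite X]
    (P2 : Set (Set X)) (hpart : Setoid.IsPartition P2)
    (h2 : ∀ B ∈ P2, ∃ a b : X, a ≠ b ∧ B = {a, b}) :
    ¬ BSleq (EX X) (∅ : Set (Chart X)) ∧ BSleq (EX X) (PStab P2) ∧
      ¬ BSleq (PStab P2) (EX X) := by
  have hle : BSleq (EX X) (PStab P2) := EX_bsleq_PStab hpart h2
  refine ⟨fun h ↦ not_countable_EX (h.countable countable_empty), hle, fun h ↦ ?_⟩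
  have hPStab : (PStab P2).Countable := h.countable_of_EX fun f hf ↦ eq_univ_of_forall hf.1.1
  exact not_countable_EX (hle.countable hPStab)

/-- for a countably infinite set `X` and a 2-uniform partition
`𝒫₂` of `X`, `∅ ≺ E_X ≺ PStab 𝒫₂`: `E_X ⋠ ∅`, `E_X ≼ PStab 𝒫₂` and
`PStab 𝒫₂ ⋠ E_X`. -/
theorem stmt18 {X : Type u} [Countable X] [Infinite X]
    (P2 : Set (Set X)) (hpart : Setoid.IsPartition P2)
    (h2 : ∀ B ∈ P2, ∃ a b : X, a ≠ b ∧ B = {a, b}) :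
    ¬ BSleq (EX X) (∅ : Set (Chart X)) ∧ BSleq (EX X) (PStab P2) ∧
      ¬ BSleq (PStab P2) (EX X) :=
  stmt18_general P2 hpart h2
end
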